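/- arXiv:2211.05399 — 2 statements merged into one kernel-verified Lean document; each statement's English description precedes it below -/
import Mathlib

section
/- Let d ≥ 1 and 0 ≤ s < d/2. There is a constant C = C(d,s) such that for every Schwartz function f on ℝ^d, ∫_{ℝ^d} |f(x)|²/|x|^{2s} dx ≤ C ∫_{ℝ^d} |2πξ|^{2s} |𝓕f(ξ)|² dξ. -/
open MeasureTheory Real FourierTransform

/-! For a frequency `t > 0`, split `f` smoothly into its frequencies below `2t` and those above `t`.
On the ball of radius `1/t`, the high frequencies contribute at most the spectral energy of `f`
above `t`, by Plancherel. The low-frequency part is bounded pointwise by `∫_{‖ξ‖ < 2t} ‖𝓕 f‖`, and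
Cauchy–Schwarz with the weight `‖ξ‖ᵃ`, where `2s < a < d`, controls the square of this integral by
a multiple of `t^(d - a) ∫_{‖ξ‖ < 2t} ‖ξ‖ᵃ ‖𝓕 f‖²`. Multiply the resulting bound on
`∫_{‖x‖ < 1/t} ‖f‖²` by `t^(2s - 1)` and integrate over `t`: by the layer cake formula the left side
becomes a multiple of `∫ ‖x‖^(-2s) ‖f‖²`, and both terms on the right become multiples of
`∫ ‖ξ‖^(2s) ‖𝓕 f‖²`. -/

open Set Metric Module
open scoped ENNReal NNReal SchwartzMap

theorem lintegral_Ioi_zero_comp_inv (g : ℝ → ℝ≥0∞) :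
    ∫⁻ t in Ioi 0, ENNReal.ofReal (t ^ (-2 : ℝ)) * g t⁻¹ = ∫⁻ t in Ioi 0, g t := by
  have himage : Inv.inv '' Ioi (0 : ℝ) = Ioi 0 := by ext t; simp
  have hderiv : ∀ t ∈ Ioi (0 : ℝ), HasDerivWithinAt Inv.inv (-(t ^ 2)⁻¹) (Ioi 0) t :=
    fun t ht ↦ (hasDerivAt_inv (ne_of_gt ht)).hasDerivWithinAt
  conv_rhs => rw [← himage, lintegral_image_eq_lintegral_abs_deriv_mul measurableSet_Ioi hderiv
    inv_injective.injOn]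
  refine setLIntegral_congr_fun measurableSet_Ioi fun t ht ↦ ?_
  rw [abs_neg, abs_of_nonneg (by positivity), rpow_neg (le_of_lt ht), rpow_two]

theorem lintegral_rpow_eq_lintegral_meas_gt_mul_of_neg {α : Type*} [MeasurableSpace α]
    {μ : Measure α} {f : α → ℝ} (hf : AEMeasurable f μ) (hpos : ∀ᵐ x ∂μ, 0 < f x) {p : ℝ}
    (hp : p < 0) :
    ∫⁻ x, ENNReal.ofReal (f x ^ p) ∂μ =
      ENNReal.ofReal (-p) * ∫⁻ t in Ioi 0, μ {x | f x < t} * ENNReal.ofReal (t ^ (p - 1)) := by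
  have hinv (x : α) : f x ^ p = (f x)⁻¹ ^ (-p) := by rw [rpow_neg_eq_inv_rpow, inv_inv]
  simp only [hinv]
  rw [lintegral_rpow_eq_lintegral_meas_lt_mul μ (hpos.mono fun x hx ↦ (inv_pos.2 hx).le) hf.inv
      (neg_pos.2 hp), ← lintegral_Ioi_zero_comp_inv]
  congr 1
  refine setLIntegral_congr_fun measurableSet_Ioi fun t (ht : 0 < t) ↦ ?_
  have hlevel : μ {x | t⁻¹ < (f x)⁻¹} = μ {x | f x < t} :=
    measure_congr <| hpos.mono fun x hx ↦ propext (inv_lt_inv₀ ht hx)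
  have hpow : t ^ (p - 1) = t ^ (-2 : ℝ) * t⁻¹ ^ (-p - 1) := by
    rw [← rpow_neg_eq_inv_rpow, ← rpow_add ht]
    ring_nf
  rw [hlevel, hpow, ENNReal.ofReal_mul (by positivity)]
  ring

theorem sq_lintegral_le_lintegral_inv_mul_lintegral_mul_sq {α : Type*} [MeasurableSpace α]
    {μ : Measure α} {w h : α → ℝ≥0∞} (hw : AEMeasurable w μ) (hh : AEMeasurable h μ)
    (hw₀ : ∀ᵐ x ∂μ, w x ≠ 0) (hw_top : ∀ᵐ x ∂μ, w x ≠ ∞) :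
    (∫⁻ x, h x ∂μ) ^ 2 ≤ (∫⁻ x, (w x)⁻¹ ∂μ) * ∫⁻ x, w x * h x ^ 2 ∂μ := by
  have hsplit : ∀ᵐ x ∂μ, h x = (w x)⁻¹ ^ (1 / 2 : ℝ) * (w x * h x ^ 2) ^ (1 / 2 : ℝ) := by
    filter_upwards [hw₀, hw_top] with x h₀ h_top
    rw [← ENNReal.mul_rpow_of_nonneg _ _ (by norm_num), ← mul_assoc,
      ENNReal.inv_mul_cancel h₀ h_top, one_mul, ← ENNReal.rpow_natCast_mul]
    norm_num
  have hsq (c : ℝ≥0∞) : (c ^ (1 / 2 : ℝ)) ^ 2 = c := by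
    rw [← ENNReal.rpow_mul_natCast]
    norm_num
  calc (∫⁻ x, h x ∂μ) ^ 2
      ≤ ((∫⁻ x, (w x)⁻¹ ∂μ) ^ (1 / 2 : ℝ) * (∫⁻ x, w x * h x ^ 2 ∂μ) ^ (1 / 2 : ℝ)) ^ 2 := by
        rw [lintegral_congr_ae hsplit]
        gcongr
        exact ENNReal.lintegral_mul_norm_pow_le hw.inv (hw.mul (hh.pow_const 2))
          (by norm_num) (by norm_num) (by norm_num)
    _ = (∫⁻ x, (w x)⁻¹ ∂μ) * ∫⁻ x, w x * h x ^ 2 ∂μ := by rw [mul_pow, hsq, hsq]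

section Energy

variable {α E : Type*} [MeasurableSpace α] [NormedAddCommGroup E] {μ : Measure α} {f : α → E}

/-- The energy distribution `‖f‖² dμ` of a function `f`, as a measure: weighted `L²` norms of `f`
become moments of this measure, to which the layer cake formula applies. -/
noncomputable def energyMeasure (μ : Measure α) (f : α → E) : Measure α :=
  μ.withDensity fun x ↦ ‖f x‖ₑ ^ 2

theorem energyMeasure_absolutelyContinuous : energyMeasure μ f ≪ μ :=
  withDensity_absolutelyContinuous _ _

theorem energyMeasure_apply {s : Set α} (hs : MeasurableSet s) :
    energyMeasure μ f s = ∫⁻ x in s, ‖f x‖ₑ ^ 2 ∂μ :=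
  withDensity_apply _ hs

theorem lintegral_energyMeasure (hf : AEStronglyMeasurable f μ) {w : α → ℝ≥0∞}
    (hw : AEMeasurable w μ) :
    ∫⁻ x, w x ∂energyMeasure μ f = ∫⁻ x, w x * ‖f x‖ₑ ^ 2 ∂μ := by
  rw [energyMeasure, lintegral_withDensity_eq_lintegral_mul₀ (hf.enorm.pow_const 2) hw]
  simp only [Pi.mul_apply, mul_comm]

theorem energyMeasure_add_le (hf : AEStronglyMeasurable f μ) (g : α → E) {s : Set α}
    (hs : MeasurableSet s) :
    energyMeasure μ (f + g) s ≤ 2 * energyMeasure μ f s + 2 * energyMeasure μ g s := by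
  have hsq (x : α) : ‖(f + g) x‖ₑ ^ 2 ≤ 2 * ‖f x‖ₑ ^ 2 + 2 * ‖g x‖ₑ ^ 2 := by
    calc ‖(f + g) x‖ₑ ^ 2 ≤ (‖f x‖ₑ + ‖g x‖ₑ) ^ 2 := by
          gcongr
          exact enorm_add_le _ _
      _ ≤ 2 * ‖f x‖ₑ ^ 2 + 2 * ‖g x‖ₑ ^ 2 := by
          have := ENNReal.rpow_add_le_mul_rpow_add_rpow ‖f x‖ₑ ‖g x‖ₑ one_le_two
          norm_num [mul_add] at this
          exact this
  simp only [energyMeasure_apply hs]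
  calc ∫⁻ x in s, ‖(f + g) x‖ₑ ^ 2 ∂μ
      ≤ ∫⁻ x in s, (2 * ‖f x‖ₑ ^ 2 + 2 * ‖g x‖ₑ ^ 2) ∂μ := lintegral_mono hsq
    _ = 2 * (∫⁻ x in s, ‖f x‖ₑ ^ 2 ∂μ) + 2 * ∫⁻ x in s, ‖g x‖ₑ ^ 2 ∂μ := by
      rw [lintegral_add_left' ((hf.restrict.enorm.pow_const 2).const_mul 2),
        lintegral_const_mul' _ _ (by simp), lintegral_const_mul' _ _ (by simp)]

theorem energyMeasure_le_of_enorm_le {c : ℝ≥0∞} (hc : ∀ x, ‖f x‖ₑ ≤ c) {s : Set α}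
    (hs : MeasurableSet s) : energyMeasure μ f s ≤ c ^ 2 * μ s := by
  rw [energyMeasure_apply hs, ← setLIntegral_const]
  gcongr
  exact hc _

theorem lintegral_ofReal_mul_norm_sq (hf : AEStronglyMeasurable f μ) {w : α → ℝ}
    (hw : AEMeasurable w μ) (hw₀ : ∀ x, 0 ≤ w x) :
    ∫⁻ x, ENNReal.ofReal (w x * ‖f x‖ ^ 2) ∂μ =
      ∫⁻ x, ENNReal.ofReal (w x) ∂energyMeasure μ f := by
  rw [lintegral_energyMeasure hf hw.ennreal_ofReal]
  refine lintegral_congr fun x ↦ ?_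
  rw [ENNReal.ofReal_mul (hw₀ x), ENNReal.ofReal_pow (norm_nonneg _), ofReal_norm]

theorem integral_mul_norm_sq (hf : AEStronglyMeasurable f μ) {w : α → ℝ}
    (hw : AEMeasurable w μ) (hw₀ : ∀ x, 0 ≤ w x) :
    ∫ x, w x * ‖f x‖ ^ 2 ∂μ = (∫⁻ x, ENNReal.ofReal (w x) ∂energyMeasure μ f).toReal := by
  rw [← lintegral_ofReal_mul_norm_sq hf hw hw₀]
  exact integral_eq_lintegral_of_nonneg_ae
    (.of_forall fun x ↦ mul_nonneg (hw₀ x) (sq_nonneg _))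
    (hw.aestronglyMeasurable.mul (hf.norm.pow 2))

theorem integrable_mul_norm_sq_iff (hf : AEStronglyMeasurable f μ) {w : α → ℝ}
    (hw : AEMeasurable w μ) (hw₀ : ∀ x, 0 ≤ w x) :
    Integrable (fun x ↦ w x * ‖f x‖ ^ 2) μ ↔
      ∫⁻ x, ENNReal.ofReal (w x) ∂energyMeasure μ f ≠ ∞ := by
  rw [← lintegral_ofReal_mul_norm_sq hf hw hw₀]
  exact (lintegral_ofReal_ne_top_iff_integrable (hw.aestronglyMeasurable.mul (hf.norm.pow 2))
    (.of_forall fun x ↦ mul_nonneg (hw₀ x) (sq_nonneg _))).symm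

end Energy

section NormLayerCake

variable {V : Type*} [NormedAddCommGroup V] [MeasurableSpace V] [OpensMeasurableSpace V]
  {μ ν : Measure V}

theorem lintegral_norm_rpow_neg_eq_lintegral_measure_ball_inv (hμ : ∀ᵐ x ∂μ, x ≠ 0) {p : ℝ}
    (hp : 0 < p) :
    ∫⁻ x, ENNReal.ofReal (‖x‖ ^ (-p)) ∂μ =
      ENNReal.ofReal p * ∫⁻ t in Ioi 0, μ (ball 0 t⁻¹) * ENNReal.ofReal (t ^ (p - 1)) := by
  simp only [rpow_neg_eq_inv_rpow]
  rw [lintegral_rpow_eq_lintegral_meas_lt_mul μ (.of_forall fun x ↦ by positivity)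
    (by fun_prop) hp]
  congr 1
  refine setLIntegral_congr_fun measurableSet_Ioi fun t (ht : 0 < t) ↦ ?_
  have hlevel : μ {x | t < ‖x‖⁻¹} = μ (ball 0 t⁻¹) :=
    measure_congr <| hμ.mono fun x hx ↦ propext <|
      (lt_inv_comm₀ ht (norm_pos_iff.2 hx)).trans mem_ball_zero_iff.symm
  rw [hlevel]

theorem lintegral_setLIntegral_ball_mul_rpow (hμ : ∀ᵐ x ∂μ, x ≠ 0) {p a R : ℝ} (hpa : p < a)
    (hR : 0 < R) :
    ENNReal.ofReal (a - p) * ∫⁻ t in Ioi 0,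
        (∫⁻ x in ball 0 (t * R), ENNReal.ofReal (‖x‖ ^ a) ∂μ) * ENNReal.ofReal (t ^ (p - a - 1)) =
      ENNReal.ofReal (R ^ (a - p)) * ∫⁻ x, ENNReal.ofReal (‖x‖ ^ p) ∂μ := by
  have hw : Measurable fun x : V ↦ ENNReal.ofReal (‖x‖ ^ a) := by fun_prop
  let m := μ.withDensity fun x ↦ ENNReal.ofReal (‖x‖ ^ a)
  have hpos : ∀ᵐ x ∂m, 0 < ‖x‖ / R :=
    withDensity_absolutelyContinuous _ _ <| hμ.mono fun x hx ↦ div_pos (norm_pos_iff.2 hx) hR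
  have hball (t : ℝ) : ∫⁻ x in ball 0 (t * R), ENNReal.ofReal (‖x‖ ^ a) ∂μ =
      m {x | ‖x‖ / R < t} := by
    rw [← withDensity_apply _ measurableSet_ball]
    congr 1
    ext x
    simp [div_lt_iff₀ hR]
  have hpow (x : V) (hx : x ≠ 0) : ‖x‖ ^ a * (‖x‖ / R) ^ (p - a) = R ^ (a - p) * ‖x‖ ^ p := by
    rw [div_rpow (norm_nonneg x) hR.le, ← neg_sub a p, rpow_neg hR.le, div_inv_eq_mul,
      ← mul_assoc, ← rpow_add (norm_pos_iff.2 hx), mul_comm]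
    ring_nf
  simp only [hball]
  rw [← neg_sub p a, ← lintegral_rpow_eq_lintegral_meas_gt_mul_of_neg (by fun_prop) hpos
    (sub_neg.2 hpa), lintegral_withDensity_eq_lintegral_mul _ hw (by fun_prop),
    ← lintegral_const_mul' _ _ ENNReal.ofReal_ne_top]
  refine lintegral_congr_ae <| hμ.mono fun x hx ↦ ?_
  simp only [Pi.mul_apply]
  rw [← ENNReal.ofReal_mul (by positivity), ← ENNReal.ofReal_mul (by positivity), hpow x hx,
    neg_sub]

theorem lintegral_norm_rpow_neg_le_of_measure_ball_inv_le (hμ : ∀ᵐ x ∂μ, x ≠ 0)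
    (hν : ∀ᵐ x ∂ν, x ≠ 0) {p a R : ℝ} (hp : 0 < p) (hpa : p < a) (hR : 0 < R) {A B : ℝ≥0}
    (h : ∀ t, 0 < t → μ (ball 0 t⁻¹) ≤ A * ν {x | t < ‖x‖} +
      B * ENNReal.ofReal (t ^ (-a)) * ∫⁻ x in ball 0 (t * R), ENNReal.ofReal (‖x‖ ^ a) ∂ν) :
    ∫⁻ x, ENNReal.ofReal (‖x‖ ^ (-p)) ∂μ ≤
      (A + ENNReal.ofReal (p / (a - p) * R ^ (a - p)) * B) *
        ∫⁻ x, ENNReal.ofReal (‖x‖ ^ p) ∂ν := by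
  set M := ∫⁻ x, ENNReal.ofReal (‖x‖ ^ p) ∂ν
  let I (t : ℝ) := ∫⁻ x in ball 0 (t * R), ENNReal.ofReal (‖x‖ ^ a) ∂ν
  have hhigh : ENNReal.ofReal p * ∫⁻ t in Ioi 0, ν {x | t < ‖x‖} * ENNReal.ofReal (t ^ (p - 1)) =
      M :=
    (lintegral_rpow_eq_lintegral_meas_lt_mul ν (.of_forall fun x ↦ norm_nonneg x)
      (by fun_prop) hp).symm
  have hlow : ENNReal.ofReal p * ∫⁻ t in Ioi 0, I t * ENNReal.ofReal (t ^ (p - a - 1)) =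
      ENNReal.ofReal (p / (a - p) * R ^ (a - p)) * M := by
    rw [ENNReal.ofReal_mul (by have := sub_pos.2 hpa; positivity), mul_assoc,
      ← lintegral_setLIntegral_ball_mul_rpow hν hpa hR, ← mul_assoc,
      ← ENNReal.ofReal_mul (by have := sub_pos.2 hpa; positivity),
      div_mul_cancel₀ _ (sub_pos.2 hpa).ne']
  have hmeas : Measurable fun t : ℝ ↦ ν {x | t < ‖x‖} :=
    Antitone.measurable fun t u htu ↦ measure_mono fun x hx ↦ lt_of_le_of_lt htu hx
  have hmeas_high : Measurable fun t : ℝ ↦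
      (A : ℝ≥0∞) * (ν {x | t < ‖x‖} * ENNReal.ofReal (t ^ (p - 1))) :=
    (hmeas.mul (by fun_prop)).const_mul _
  rw [lintegral_norm_rpow_neg_eq_lintegral_measure_ball_inv hμ hp]
  calc ENNReal.ofReal p * ∫⁻ t in Ioi 0, μ (ball 0 t⁻¹) * ENNReal.ofReal (t ^ (p - 1))
      ≤ ENNReal.ofReal p * ∫⁻ t in Ioi 0, (A * (ν {x | t < ‖x‖} * ENNReal.ofReal (t ^ (p - 1))) +
          B * (I t * ENNReal.ofReal (t ^ (p - a - 1)))) := by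
        gcongr ENNReal.ofReal p * ?_
        refine setLIntegral_mono' measurableSet_Ioi fun t (ht : 0 < t) ↦ ?_
        have hpow : t ^ (p - a - 1) = t ^ (-a) * t ^ (p - 1) := by
          rw [← rpow_add ht]
          ring_nf
        rw [hpow, ENNReal.ofReal_mul (by positivity)]
        refine (mul_le_mul_left (h t ht) _).trans_eq ?_
        ring
    _ = A * (ENNReal.ofReal p * ∫⁻ t in Ioi 0, ν {x | t < ‖x‖} * ENNReal.ofReal (t ^ (p - 1))) +
          B * (ENNReal.ofReal p * ∫⁻ t in Ioi 0, I t * ENNReal.ofReal (t ^ (p - a - 1))) := by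
        rw [lintegral_add_left hmeas_high,
          lintegral_const_mul' _ _ ENNReal.coe_ne_top, lintegral_const_mul' _ _ ENNReal.coe_ne_top]
        ring
    _ = (A + ENNReal.ofReal (p / (a - p) * R ^ (a - p)) * B) * M := by
        rw [hhigh, hlow]
        ring

end NormLayerCake

section NormPowers

variable {V : Type*} [NormedAddCommGroup V] [MeasurableSpace V] [BorelSpace V] {μ : Measure V}

theorem sq_setLIntegral_enorm_le [NullSingletonClass μ] {E : Type*} [NormedAddCommGroup E]
    {g : V → E} (hg : AEStronglyMeasurable g μ) (p : ℝ) {s : Set V} (hs : MeasurableSet s) :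
    (∫⁻ x in s, ‖g x‖ₑ ∂μ) ^ 2 ≤ (∫⁻ x in s, ENNReal.ofReal (‖x‖ ^ (-p)) ∂μ) *
      ∫⁻ x in s, ENNReal.ofReal (‖x‖ ^ p) ∂energyMeasure μ g := by
  have hw : Measurable fun x : V ↦ ENNReal.ofReal (‖x‖ ^ p) := by fun_prop
  have hne : ∀ᵐ x ∂μ.restrict s, 0 < ‖x‖ :=
    (ae_restrict_of_ae (Measure.ae_ne μ 0)).mono fun x ↦ norm_pos_iff.2
  have hinv : ∀ᵐ x ∂μ.restrict s, ENNReal.ofReal (‖x‖ ^ (-p)) = (ENNReal.ofReal (‖x‖ ^ p))⁻¹ :=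
    hne.mono fun x hx ↦ by rw [rpow_neg hx.le, ENNReal.ofReal_inv_of_pos (rpow_pos_of_pos hx p)]
  have henergy : (energyMeasure μ g).restrict s = energyMeasure (μ.restrict s) g :=
    restrict_withDensity hs _
  rw [lintegral_congr_ae hinv, henergy, lintegral_energyMeasure hg.restrict hw.aemeasurable]
  exact sq_lintegral_le_lintegral_inv_mul_lintegral_mul_sq hw.aemeasurable hg.restrict.enorm
    (hne.mono fun x hx ↦ (ENNReal.ofReal_pos.2 (rpow_pos_of_pos hx p)).ne') (by simp)

variable [NormedSpace ℝ V] [FiniteDimensional ℝ V] [μ.IsAddHaarMeasure]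

theorem setLIntegral_ball_mul_norm_rpow {t : ℝ} (ht : 0 < t) (R p : ℝ) :
    ∫⁻ x in ball (0 : V) (t * R), ENNReal.ofReal (‖x‖ ^ p) ∂μ =
      ENNReal.ofReal (t ^ (finrank ℝ V + p)) *
        ∫⁻ x in ball (0 : V) R, ENNReal.ofReal (‖x‖ ^ p) ∂μ := by
  have hpow (x : V) : ENNReal.ofReal (‖t • x‖ ^ p) =
      ENNReal.ofReal (t ^ p) * ENNReal.ofReal (‖x‖ ^ p) := by
    rw [norm_smul, norm_of_nonneg ht.le, mul_rpow ht.le (norm_nonneg _),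
      ENNReal.ofReal_mul (by positivity)]
  have hball : (t • ·) ⁻¹' ball (0 : V) (t * R) = ball 0 R := by
    ext x
    simp [norm_smul, abs_of_pos ht, ht]
  have hmap : μ = ENNReal.ofReal (t ^ finrank ℝ V) • μ.map (t • ·) := by
    rw [Measure.map_addHaar_smul μ ht.ne', smul_smul, ← ENNReal.ofReal_mul (by positivity),
      abs_of_pos (by positivity), mul_inv_cancel₀ (by positivity), ENNReal.ofReal_one, one_smul]
  conv_lhs => rw [hmap]
  rw [Measure.restrict_smul, lintegral_smul_measure, setLIntegral_map measurableSet_ball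
    (by fun_prop) (by fun_prop), hball]
  simp only [hpow]
  rw [lintegral_const_mul' _ _ ENNReal.ofReal_ne_top, smul_eq_mul, ← mul_assoc,
    ← ENNReal.ofReal_mul (by positivity), rpow_add ht, rpow_natCast]

theorem setLIntegral_ball_norm_rpow_ne_top [Nontrivial V] {p : ℝ} (hp : -(finrank ℝ V : ℝ) < p)
    (R : ℝ) : ∫⁻ x in ball (0 : V) R, ENNReal.ofReal (‖x‖ ^ p) ∂μ ≠ ∞ := by
  have hint : IntegrableOn (fun x : V ↦ ‖x‖ ^ p) (ball 0 R) μ := by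
    refine integrableOn_ball_of_norm_le_rpow (C := 1) (α := -p) finrank_pos (by linarith)
      (.of_forall fun x ↦ ?_)
      (measurable_norm.pow_const p).aestronglyMeasurable
    rw [norm_of_nonneg (by positivity), one_mul, neg_neg]
  exact hint.lintegral_lt_top.ne

theorem measure_ball_inv_mul_setLIntegral_ball {t : ℝ} (ht : 0 < t) (R p : ℝ) :
    μ (ball 0 t⁻¹) * ∫⁻ x in ball (0 : V) (t * R), ENNReal.ofReal (‖x‖ ^ p) ∂μ =
      ENNReal.ofReal (t ^ p) *
        (μ (ball 0 1) * ∫⁻ x in ball (0 : V) R, ENNReal.ofReal (‖x‖ ^ p) ∂μ) := by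
  have hpow : (t⁻¹) ^ finrank ℝ V * t ^ (finrank ℝ V + p) = t ^ p := by
    rw [rpow_add ht, rpow_natCast, inv_pow, inv_mul_cancel_left₀ (by positivity)]
  rw [Measure.addHaar_ball_of_pos μ _ (inv_pos.2 ht), setLIntegral_ball_mul_norm_rpow ht,
    mul_mul_mul_comm, ← ENNReal.ofReal_mul (by positivity), hpow]

end NormPowers

section Schwartz

variable {V H : Type*} [NormedAddCommGroup V] [InnerProductSpace ℝ V] [FiniteDimensional ℝ V]
  [MeasurableSpace V] [BorelSpace V]

theorem lintegral_norm_rpow_energyMeasure_ne_top {F : Type*} [NormedAddCommGroup F]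
    [NormedSpace ℝ F] {μ : Measure V} [μ.HasTemperateGrowth] {p : ℝ} (hp : 0 ≤ p) (f : 𝓢(V, F)) :
    ∫⁻ x, ENNReal.ofReal (‖x‖ ^ p) ∂energyMeasure μ f ≠ ∞ := by
  rw [← integrable_mul_norm_sq_iff f.continuous.aestronglyMeasurable (by fun_prop)
    (fun x ↦ by positivity)]
  let w (x : V) : ℝ := (1 + ‖x‖ ^ 2) ^ (p / 4)
  have hw : w.HasTemperateGrowth := Function.hasTemperateGrowth_one_add_norm_sq_rpow V (p / 4)
  have hint : Integrable (fun x ↦ ‖SchwartzMap.smulLeftCLM F w f x‖ ^ 2) μ :=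
    ((SchwartzMap.smulLeftCLM F w f).memLp 2 μ).integrable_norm_pow two_ne_zero
  refine hint.mono' (by fun_prop) (.of_forall fun x ↦ ?_)
  have hweight : ‖x‖ ^ p ≤ w x ^ 2 := by
    calc ‖x‖ ^ p = (‖x‖ ^ 2) ^ (p / 2) := by
          rw [← rpow_natCast_mul (norm_nonneg x)]
          ring_nf
      _ ≤ (1 + ‖x‖ ^ 2) ^ (p / 2) := by gcongr; linarith
      _ = w x ^ 2 := by
          rw [← rpow_mul_natCast (by positivity)]
          ring_nf
  rw [norm_of_nonneg (by positivity), SchwartzMap.smulLeftCLM_apply_apply hw, norm_smul, mul_pow,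
    Real.norm_eq_abs, sq_abs]
  gcongr

section LowPass

variable {F : Type*} [NormedAddCommGroup F] [NormedSpace ℂ F] [CompleteSpace F]

theorem enorm_le_lintegral_enorm_fourier (f : 𝓢(V, F)) (x : V) :
    ‖f x‖ₑ ≤ ∫⁻ ξ, ‖𝓕 f ξ‖ₑ := by
  have hinv : f x = ∫ ξ, 𝐞 (inner ℝ ξ x) • 𝓕 f ξ := by
    rw [← Real.fourierInv_eq, ← SchwartzMap.fourierInv_coe, FourierTransform.fourierInv_fourier_eq]
  rw [hinv]
  refine (enorm_integral_le_lintegral_enorm _).trans_eq (lintegral_congr fun ξ ↦ ?_)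
  rw [← ofReal_norm, Circle.norm_smul, ofReal_norm]

theorem fourier_fourierMultiplierCLM_apply {g : V → ℝ} (hg : g.HasTemperateGrowth)
    (f : 𝓢(V, F)) (ξ : V) :
    𝓕 (SchwartzMap.fourierMultiplierCLM F g f) ξ = g ξ • 𝓕 f ξ := by
  rw [SchwartzMap.fourierMultiplierCLM_apply, FourierTransform.fourier_fourierInv_eq,
    SchwartzMap.smulLeftCLM_apply_apply hg]

/-- The smooth projection of `f` to low frequencies: its Fourier transform is cut off by `φ`, hence
unchanged on the ball of radius `φ.rIn` and zero outside the ball of radius `φ.rOut`. -/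
noncomputable def lowPass (φ : ContDiffBump (0 : V)) (f : 𝓢(V, F)) : 𝓢(V, F) :=
  SchwartzMap.fourierMultiplierCLM F φ f

theorem fourier_lowPass_apply (φ : ContDiffBump (0 : V)) (f : 𝓢(V, F)) (ξ : V) :
    𝓕 (lowPass φ f) ξ = φ ξ • 𝓕 f ξ :=
  fourier_fourierMultiplierCLM_apply (φ.hasCompactSupport.hasTemperateGrowth φ.contDiff) f ξ

theorem enorm_lowPass_le (φ : ContDiffBump (0 : V)) (f : 𝓢(V, F)) (x : V) :
    ‖lowPass φ f x‖ₑ ≤ ∫⁻ ξ in ball 0 φ.rOut, ‖𝓕 f ξ‖ₑ := by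
  rw [← lintegral_indicator measurableSet_ball]
  refine (enorm_le_lintegral_enorm_fourier _ x).trans (lintegral_mono fun ξ ↦ ?_)
  rw [fourier_lowPass_apply]
  by_cases hξ : ξ ∈ ball 0 φ.rOut
  · rw [indicator_of_mem hξ, enorm_smul]
    refine mul_le_of_le_one_left' ?_
    rw [enorm_of_nonneg φ.nonneg]
    exact ENNReal.ofReal_le_one.2 φ.le_one
  · rw [φ.zero_of_le_dist (not_lt.1 hξ), zero_smul, enorm_zero]
    exact zero_le

end LowPass

variable [NormedAddCommGroup H] [InnerProductSpace ℂ H]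

/-- The spectral energy distribution `‖𝓕 f‖² dξ` of a Schwartz function `f`, whose moments are
the squared homogeneous Sobolev norms of `f`. -/
noncomputable def spectralMeasure (f : 𝓢(V, H)) : Measure V :=
  energyMeasure volume (𝓕 f : 𝓢(V, H))

theorem integral_two_pi_mul_norm_rpow_mul_norm_fourier_sq (p : ℝ) (f : 𝓢(V, H)) :
    ∫ ξ, (2 * π * ‖ξ‖) ^ p * ‖𝓕 (⇑f) ξ‖ ^ 2 =
      (2 * π) ^ p * (∫⁻ ξ, ENNReal.ofReal (‖ξ‖ ^ p) ∂spectralMeasure f).toReal := by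
  rw [spectralMeasure, ← integral_mul_norm_sq (𝓕 f).continuous.aestronglyMeasurable (by fun_prop)
    (fun ξ ↦ by positivity), ← integral_const_mul, SchwartzMap.fourier_coe]
  refine integral_congr_ae (.of_forall fun ξ ↦ ?_)
  beta_reduce
  rw [mul_rpow two_pi_pos.le (norm_nonneg ξ), mul_assoc]

variable [CompleteSpace H]

theorem spectralMeasure_univ (f : 𝓢(V, H)) :
    spectralMeasure f univ = energyMeasure volume f univ := by
  have henergy (g : 𝓢(V, H)) :
      energyMeasure volume g univ = ENNReal.ofReal (∫ x, ‖g x‖ ^ 2) := by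
    have hint : Integrable fun x ↦ ‖g x‖ ^ 2 := (g.memLp 2).integrable_norm_pow two_ne_zero
    rw [ofReal_integral_eq_lintegral_ofReal hint (.of_forall fun x ↦ by positivity),
      energyMeasure_apply .univ, setLIntegral_univ]
    simp only [ENNReal.ofReal_pow (norm_nonneg _), ofReal_norm]
  rw [spectralMeasure, henergy, henergy, SchwartzMap.integral_norm_sq_fourier]

theorem energyMeasure_sub_lowPass_univ_le (φ : ContDiffBump (0 : V)) (f : 𝓢(V, H)) :
    energyMeasure volume ⇑(f - lowPass φ f) univ ≤ spectralMeasure f {ξ | φ.rIn < ‖ξ‖} := by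
  have hmeas : MeasurableSet {ξ : V | φ.rIn < ‖ξ‖} :=
    measurableSet_lt measurable_const measurable_norm
  have hfourier (ξ : V) : 𝓕 (f - lowPass φ f) ξ = (1 - φ ξ) • 𝓕 f ξ := by
    rw [sub_eq_add_neg, FourierTransform.fourier_add, FourierTransform.fourier_neg,
      add_apply, neg_apply, fourier_lowPass_apply, ← sub_eq_add_neg, sub_smul, one_smul]
  rw [← spectralMeasure_univ, spectralMeasure, spectralMeasure, energyMeasure_apply .univ,
    energyMeasure_apply hmeas, setLIntegral_univ, ← lintegral_indicator hmeas]
  refine lintegral_mono fun ξ ↦ ?_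
  rw [hfourier]
  by_cases hξ : φ.rIn < ‖ξ‖
  · rw [indicator_of_mem (by exact hξ), enorm_smul]
    gcongr
    refine mul_le_of_le_one_left' ?_
    rw [enorm_of_nonneg (sub_nonneg.2 φ.le_one)]
    exact ENNReal.ofReal_le_one.2 (sub_le_self _ φ.nonneg)
  · rw [φ.one_of_mem_closedBall (mem_closedBall_zero_iff.2 (not_lt.1 hξ))]
    simp

theorem energyMeasure_le_lowPass (φ : ContDiffBump (0 : V)) (f : 𝓢(V, H)) {s : Set V}
    (hs : MeasurableSet s) :
    energyMeasure volume f s ≤ 2 * spectralMeasure f {ξ | φ.rIn < ‖ξ‖} +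
      2 * ((∫⁻ ξ in ball 0 φ.rOut, ‖𝓕 f ξ‖ₑ) ^ 2 * volume s) := by
  have hsplit : ⇑f = ⇑(f - lowPass φ f) + ⇑(lowPass φ f) := by
    ext x
    simp
  calc energyMeasure volume f s
      ≤ 2 * energyMeasure volume ⇑(f - lowPass φ f) s +
          2 * energyMeasure volume (lowPass φ f) s := by
        conv_lhs => rw [hsplit]
        exact energyMeasure_add_le (SchwartzMap.continuous _).aestronglyMeasurable _ hs
    _ ≤ 2 * spectralMeasure f {ξ | φ.rIn < ‖ξ‖} +
          2 * ((∫⁻ ξ in ball 0 φ.rOut, ‖𝓕 f ξ‖ₑ) ^ 2 * volume s) := by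
        gcongr ?_ + 2 * ?_
        · gcongr 2 * ?_
          exact (measure_mono (subset_univ s)).trans (energyMeasure_sub_lowPass_univ_le φ f)
        · exact energyMeasure_le_of_enorm_le (enorm_lowPass_le φ f) hs

theorem exists_energyMeasure_ball_inv_le [Nontrivial V] {a : ℝ} (ha : a < finrank ℝ V) :
    ∃ B : ℝ≥0, ∀ (f : 𝓢(V, H)) (t : ℝ), 0 < t →
      energyMeasure volume f (ball 0 t⁻¹) ≤ 2 * spectralMeasure f {ξ | t < ‖ξ‖} +
        B * ENNReal.ofReal (t ^ (-a)) *
          ∫⁻ ξ in ball 0 (t * 2), ENNReal.ofReal (‖ξ‖ ^ a) ∂spectralMeasure f := by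
  let B : ℝ≥0∞ := 2 * (volume (ball (0 : V) 1) *
    ∫⁻ x in ball (0 : V) 2, ENNReal.ofReal (‖x‖ ^ (-a)))
  have hB : B ≠ ∞ := ENNReal.mul_ne_top (by simp) <| ENNReal.mul_ne_top measure_ball_lt_top.ne <|
    setLIntegral_ball_norm_rpow_ne_top (neg_lt_neg ha) 2
  refine ⟨B.toNNReal, fun f t ht ↦ ?_⟩
  let φ : ContDiffBump (0 : V) := ⟨t, t * 2, ht, by linarith⟩
  refine (energyMeasure_le_lowPass φ f measurableSet_ball).trans ?_
  rw [ENNReal.coe_toNNReal hB]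
  gcongr 2 * spectralMeasure f {ξ | t < ‖ξ‖} + ?_
  set I := ∫⁻ ξ in ball 0 (t * 2), ENNReal.ofReal (‖ξ‖ ^ a) ∂spectralMeasure f
  calc 2 * ((∫⁻ ξ in ball 0 (t * 2), ‖𝓕 f ξ‖ₑ) ^ 2 * volume (ball (0 : V) t⁻¹))
      ≤ 2 * ((∫⁻ ξ in ball (0 : V) (t * 2), ENNReal.ofReal (‖ξ‖ ^ (-a))) * I *
          volume (ball (0 : V) t⁻¹)) := by
        gcongr
        exact sq_setLIntegral_enorm_le (𝓕 f).continuous.aestronglyMeasurable a measurableSet_ball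
    _ = 2 * (volume (ball (0 : V) t⁻¹) *
          ∫⁻ ξ in ball (0 : V) (t * 2), ENNReal.ofReal (‖ξ‖ ^ (-a))) * I := by ring
    _ = B * ENNReal.ofReal (t ^ (-a)) * I := by
        rw [measure_ball_inv_mul_setLIntegral_ball ht]
        ring

theorem exists_lintegral_norm_rpow_neg_le {p : ℝ} (hp : 0 ≤ p) (hpV : p < finrank ℝ V) :
    ∃ C : ℝ≥0, ∀ f : 𝓢(V, H), ∫⁻ x, ENNReal.ofReal (‖x‖ ^ (-p)) ∂energyMeasure volume f ≤
      C * ∫⁻ ξ, ENNReal.ofReal (‖ξ‖ ^ p) ∂spectralMeasure f := by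
  have : Nontrivial V := nontrivial_of_finrank_pos (Nat.cast_pos.1 (hp.trans_lt hpV))
  rcases hp.eq_or_lt with rfl | hp
  · refine ⟨1, fun f ↦ ?_⟩
    simp [spectralMeasure_univ]
  obtain ⟨a, hpa, haV⟩ := exists_between hpV
  obtain ⟨B, hB⟩ := exists_energyMeasure_ball_inv_le (V := V) (H := H) haV
  refine ⟨2 + (p / (a - p) * 2 ^ (a - p)).toNNReal * B, fun f ↦ ?_⟩
  have hne (g : 𝓢(V, H)) : ∀ᵐ x ∂energyMeasure volume g, x ≠ 0 :=
    energyMeasure_absolutelyContinuous (Measure.ae_ne volume 0)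
  simpa [ENNReal.ofReal, spectralMeasure] using
    lintegral_norm_rpow_neg_le_of_measure_ball_inv_le (hne f) (hne (𝓕 f)) hp hpa two_pos (hB f)

theorem fractional_hardy_L2_general {s : ℝ} (hs : 0 ≤ s) (hsV : s < finrank ℝ V / 2) :
    ∃ C : ℝ, 0 < C ∧ ∀ f : 𝓢(V, H),
      Integrable (fun x ↦ ‖f x‖ ^ 2 / ‖x‖ ^ (2 * s)) ∧
      ∫ x, ‖f x‖ ^ 2 / ‖x‖ ^ (2 * s) ≤ C * ∫ ξ, (2 * π * ‖ξ‖) ^ (2 * s) * ‖𝓕 (⇑f) ξ‖ ^ 2 := by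
  have hp : 0 ≤ 2 * s := by positivity
  obtain ⟨C, hC⟩ := exists_lintegral_norm_rpow_neg_le (V := V) (H := H) hp (by linarith)
  refine ⟨(C + 1) / (2 * π) ^ (2 * s), by positivity, fun f ↦ ?_⟩
  let M := ∫⁻ ξ, ENNReal.ofReal (‖ξ‖ ^ (2 * s)) ∂spectralMeasure f
  have hf : AEStronglyMeasurable f := f.continuous.aestronglyMeasurable
  have hM : ENNReal.ofNNReal C * M ≠ ∞ :=
    ENNReal.mul_ne_top ENNReal.coe_ne_top
      (lintegral_norm_rpow_energyMeasure_ne_top hp (𝓕 f : 𝓢(V, H)))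
  have hdiv (x : V) : ‖f x‖ ^ 2 / ‖x‖ ^ (2 * s) = ‖x‖ ^ (-(2 * s)) * ‖f x‖ ^ 2 := by
    rw [rpow_neg (norm_nonneg x), div_eq_inv_mul]
  simp only [hdiv]
  refine ⟨(integrable_mul_norm_sq_iff hf (by fun_prop) fun x ↦ by positivity).2
    ((hC f).trans_lt hM.lt_top).ne, ?_⟩
  calc ∫ x, ‖x‖ ^ (-(2 * s)) * ‖f x‖ ^ 2
      = (∫⁻ x, ENNReal.ofReal (‖x‖ ^ (-(2 * s))) ∂energyMeasure volume f).toReal :=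
        integral_mul_norm_sq hf (by fun_prop) fun x ↦ by positivity
    _ ≤ C * M.toReal := by simpa using ENNReal.toReal_mono hM (hC f)
    _ ≤ (C + 1) * M.toReal := by gcongr; simp
    _ = (C + 1) / (2 * π) ^ (2 * s) * ∫ ξ, (2 * π * ‖ξ‖) ^ (2 * s) * ‖𝓕 (⇑f) ξ‖ ^ 2 := by
        rw [integral_two_pi_mul_norm_rpow_mul_norm_fourier_sq, ← mul_assoc,
          div_mul_cancel₀ _ (by positivity)]

end Schwartz

/-- Fractional Hardy inequality in `L²`: for `0 ≤ s < d/2` there is `C = C(d,s)` such that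
`∫ |f(x)|²/|x|^{2s} dx ≤ C ∫ |2πξ|^{2s} |𝓕f(ξ)|² dξ` for every Schwartz function `f`. -/
theorem fractional_hardy_L2 (d : ℕ) (hd : 1 ≤ d) (s : ℝ) (hs : 0 ≤ s)
    (hsd : s < (d : ℝ) / 2) :
    ∃ C : ℝ, 0 < C ∧ ∀ f : SchwartzMap (EuclideanSpace ℝ (Fin d)) ℂ,
      ∫ x : EuclideanSpace ℝ (Fin d), ‖f x‖ ^ 2 / ‖x‖ ^ (2 * s) ≤
        C * ∫ ξ : EuclideanSpace ℝ (Fin d), (2 * π * ‖ξ‖) ^ (2 * s) * ‖𝓕 (⇑f) ξ‖ ^ 2 := by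
  obtain ⟨C, hC, hardy⟩ := fractional_hardy_L2_general (V := EuclideanSpace ℝ (Fin d)) (H := ℂ) hs
    (by rwa [finrank_euclideanSpace_fin])
  exact ⟨C, hC, fun f ↦ (hardy f).2⟩
end

section
/- (Stein–Weiss inequality.) Let d ≥ 1, 0 < λ < d, 1 < p < ∞, p ≤ q < ∞, α < d/p′ (p′ the conjugate exponent of p), β < d/q, α + β ≥ 0, and 1/q = 1/p + (λ+α+β)/d − 1. There is a constant C = C(d,q,p,λ,α,β) such that for every measurable f on ℝ^d, ( ∫_{ℝ^d} ( |x|^{−β} ∫_{ℝ^d} |f(y)|/|x−y|^λ dy )^q dx )^{1/q} ≤ C ( ∫_{ℝ^d} ( |f(x)| |x|^{α} )^{p} dx )^{1/p}. -/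
open MeasureTheory Real
open scoped ENNReal NNReal

/-!
In terms of `g = |y| ^ α * f` the inequality says that the integral operator with kernel
`|x| ^ (-β) * |x - y| ^ (-λ) * |y| ^ (-α)` is bounded from `L^p` to `L^q`, so the kernel may be
replaced by larger ones on different regions. Where `|y| ≤ |x| / 2` or `|x| ≤ |y| / 2`, the factor
`|x - y|` is comparable to the larger of the two norms and a Hardy kernel `|x| ^ (-a) * |y| ^ (-b)`
remains. Multiplying and dividing it by `|y| ^ s`, Hölder's inequality in `y` and then Tonelli
reduce its boundedness to power integrals over balls or their complements; the strict inequalities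
`α < d / p'` and `β < d / q` leave room for such an `s`.

Where `|x|` and `|y|` are comparable, `α + β ≥ 0` gives `|x| ^ (-(α + β)) ≲ |x - y| ^ (-(α + β))`.
For `p < q` this leaves the Hardy–Littlewood–Sobolev inequality. It follows by splitting the Riesz
kernel at a radius, and `g` at a height, both powers of the level `t`: in the layer cake formula
only the large part of `g` against the near part of the kernel then contributes at level `t`. For
`p = q` the power integrals bound rows and columns of the kernel and Schur's test applies.
-/

section BoundedKernel

variable {X Y : Type*} [MeasurableSpace X] [MeasurableSpace Y] {μ : Measure X} {ν : Measure Y}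
  {p p' q : ℝ} {K K' : X → Y → ℝ≥0∞}

/-- Of the power `J ^ (q / p)` of `J = ∫ k₂ ^ p * g ^ p` left by Hölder's inequality only one factor
`J` is kept, the rest being controlled by `J ≤ v ^ p * ∫ g ^ p`. -/
lemma rpow_lintegral_mul_mul_le (hpp' : p.HolderConjugate p') (hpq : p ≤ q) {k₁ k₂ g : Y → ℝ≥0∞}
    (hk₁ : AEMeasurable k₁ ν) (hk₂ : AEMeasurable k₂ ν) (hg : AEMeasurable g ν) {u v : ℝ≥0∞}
    (hu : (∫⁻ y, k₁ y ^ p' ∂ν) ^ (1 / p') ≤ u) (hv : ∀ᵐ y ∂ν, k₂ y ≤ v) :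
    (∫⁻ y, k₁ y * k₂ y * g y ∂ν) ^ q
      ≤ (∫⁻ y, g y ^ p ∂ν) ^ ((q - p) / p)
        * (u ^ q * v ^ (q - p) * ∫⁻ y, k₂ y ^ p * g y ^ p ∂ν) := by
  have hp := hpp'.pos
  have hq : 0 < q := hp.trans_le hpq
  have hqp : 0 ≤ (q - p) / p := div_nonneg (sub_nonneg.2 hpq) hp.le
  set G := ∫⁻ y, g y ^ p ∂ν
  set J := ∫⁻ y, k₂ y ^ p * g y ^ p ∂ν
  have hHolder : ∫⁻ y, k₁ y * k₂ y * g y ∂ν ≤ u * J ^ (1 / p) := by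
    have := ENNReal.lintegral_mul_le_Lp_mul_Lq ν hpp'.symm hk₁ (hk₂.mul hg)
    simp_rw [Pi.mul_apply, ENNReal.mul_rpow_of_nonneg _ _ hp.le, ← mul_assoc] at this
    exact this.trans (by gcongr)
  have hJ : J ≤ v ^ p * G := by
    rw [← lintegral_const_mul'' _ (hg.pow_const p)]
    refine lintegral_mono_ae ?_
    filter_upwards [hv] with y hy
    gcongr
  calc (∫⁻ y, k₁ y * k₂ y * g y ∂ν) ^ q
      ≤ (u * J ^ (1 / p)) ^ q := by gcongr
    _ = u ^ q * (J ^ ((q - p) / p) * J) := by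
        nth_rw 3 [← ENNReal.rpow_one J]
        rw [ENNReal.mul_rpow_of_nonneg _ _ hq.le, ← ENNReal.rpow_mul,
          ← ENNReal.rpow_add_of_nonneg _ _ hqp zero_le_one]
        congr 2
        field_simp
        ring
    _ ≤ u ^ q * ((v ^ p * G) ^ ((q - p) / p) * J) := by gcongr
    _ = G ^ ((q - p) / p) * (u ^ q * v ^ (q - p) * J) := by
        rw [ENNReal.mul_rpow_of_nonneg _ _ hqp, ← ENNReal.rpow_mul, mul_div_cancel₀ _ hp.ne']
        ring

lemma lintegral_mul_lintegral_mul_le [SFinite μ] [SFinite ν] {w : X → ℝ≥0∞} {h : Y → ℝ≥0∞}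
    (hw : Measurable w) (hK : Measurable (Function.uncurry K)) (hh : Measurable h) {B : ℝ≥0∞}
    (hB : ∀ᵐ y ∂ν, ∫⁻ x, w x * K x y ∂μ ≤ B) :
    ∫⁻ x, w x * ∫⁻ y, K x y * h y ∂ν ∂μ ≤ B * ∫⁻ y, h y ∂ν := by
  have hKh : Measurable (Function.uncurry fun x y => K x y * h y) :=
    hK.mul (hh.comp measurable_snd)
  calc ∫⁻ x, w x * ∫⁻ y, K x y * h y ∂ν ∂μ
      = ∫⁻ x, ∫⁻ y, w x * (K x y * h y) ∂ν ∂μ :=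
        lintegral_congr fun x => (lintegral_const_mul _ hKh.of_uncurry_left).symm
    _ = ∫⁻ y, ∫⁻ x, w x * (K x y * h y) ∂μ ∂ν :=
        lintegral_lintegral_swap ((hw.comp measurable_fst).mul hKh).aemeasurable
    _ = ∫⁻ y, (∫⁻ x, w x * K x y ∂μ) * h y ∂ν := by
        simp_rw [← mul_assoc]
        exact lintegral_congr fun y => lintegral_mul_const _ (hw.mul hK.of_uncurry_right)
    _ ≤ ∫⁻ y, B * h y ∂ν := by
        refine lintegral_mono_ae ?_
        filter_upwards [hB] with y hy
        gcongr
    _ = B * ∫⁻ y, h y ∂ν := lintegral_const_mul _ hh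

/-- The integral operator with nonnegative kernel `K` is bounded from `L^p(ν)` to `L^q(μ)`. It is
enough to test it on nonnegative functions, so everything takes values in `ℝ≥0∞`. -/
def IsBoundedKernel (p q : ℝ) (ν : Measure Y) (μ : Measure X) (K : X → Y → ℝ≥0∞) : Prop :=
  ∃ C : ℝ≥0∞, C ≠ ⊤ ∧ ∀ g : Y → ℝ≥0∞, Measurable g →
    (∫⁻ x, (∫⁻ y, K x y * g y ∂ν) ^ q ∂μ) ^ (1 / q) ≤ C * (∫⁻ y, g y ^ p ∂ν) ^ (1 / p)

namespace IsBoundedKernel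

lemma mono_ae (hq : 0 ≤ q) (hK' : IsBoundedKernel p q ν μ K')
    (h : ∀ᵐ x ∂μ, ∀ᵐ y ∂ν, K x y ≤ K' x y) : IsBoundedKernel p q ν μ K := by
  obtain ⟨C, hC, hbound⟩ := hK'
  refine ⟨C, hC, fun g hg => le_trans ?_ (hbound g hg)⟩
  refine ENNReal.rpow_le_rpow (lintegral_mono_ae ?_) (by positivity)
  filter_upwards [h] with x hx
  refine ENNReal.rpow_le_rpow (lintegral_mono_ae ?_) hq
  filter_upwards [hx] with y hy
  gcongr

lemma const_mul {c : ℝ≥0∞} (hc : c ≠ ⊤) (hq : 0 < q) (hK : IsBoundedKernel p q ν μ K) :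
    IsBoundedKernel p q ν μ (fun x y => c * K x y) := by
  obtain ⟨C, hC, hbound⟩ := hK
  refine ⟨c * C, ENNReal.mul_ne_top hc hC, fun g hg => ?_⟩
  calc (∫⁻ x, (∫⁻ y, c * K x y * g y ∂ν) ^ q ∂μ) ^ (1 / q)
      = (c ^ q * ∫⁻ x, (∫⁻ y, K x y * g y ∂ν) ^ q ∂μ) ^ (1 / q) := by
        simp_rw [mul_assoc, lintegral_const_mul' _ _ hc, ENNReal.mul_rpow_of_nonneg _ _ hq.le]
        rw [lintegral_const_mul' _ _ (ENNReal.rpow_ne_top_of_nonneg hq.le hc)]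
    _ = c * (∫⁻ x, (∫⁻ y, K x y * g y ∂ν) ^ q ∂μ) ^ (1 / q) := by
        rw [ENNReal.mul_rpow_of_nonneg _ _ (by positivity), one_div, ENNReal.rpow_rpow_inv hq.ne']
    _ ≤ c * C * (∫⁻ y, g y ^ p ∂ν) ^ (1 / p) := by
        rw [mul_assoc]
        gcongr
        exact hbound g hg

lemma add [SFinite ν] (hq : 1 ≤ q) (hKm : Measurable (Function.uncurry K))
    (hKm' : Measurable (Function.uncurry K')) (hK : IsBoundedKernel p q ν μ K)
    (hK' : IsBoundedKernel p q ν μ K') :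
    IsBoundedKernel p q ν μ (fun x y => K x y + K' x y) := by
  obtain ⟨C, hC, hbound⟩ := hK
  obtain ⟨C', hC', hbound'⟩ := hK'
  refine ⟨C + C', ENNReal.add_ne_top.2 ⟨hC, hC'⟩, fun g hg => ?_⟩
  have hsplit (x : X) :
      ∫⁻ y, (K x y + K' x y) * g y ∂ν = ∫⁻ y, K x y * g y ∂ν + ∫⁻ y, K' x y * g y ∂ν := by
    simp_rw [add_mul]
    exact lintegral_add_left (hKm.of_uncurry_left.mul hg) _
  have hmeas {L : X → Y → ℝ≥0∞} (hL : Measurable (Function.uncurry L)) :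
      AEMeasurable (fun x => ∫⁻ y, L x y * g y ∂ν) μ :=
    (hL.mul (hg.comp measurable_snd)).lintegral_prod_right'.aemeasurable
  simp_rw [hsplit]
  calc (∫⁻ x, (∫⁻ y, K x y * g y ∂ν + ∫⁻ y, K' x y * g y ∂ν) ^ q ∂μ) ^ (1 / q)
      ≤ (∫⁻ x, (∫⁻ y, K x y * g y ∂ν) ^ q ∂μ) ^ (1 / q)
          + (∫⁻ x, (∫⁻ y, K' x y * g y ∂ν) ^ q ∂μ) ^ (1 / q) :=
        ENNReal.lintegral_Lp_add_le (hmeas hKm) (hmeas hKm') hq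
    _ ≤ (C + C') * (∫⁻ y, g y ^ p ∂ν) ^ (1 / p) := by
        rw [add_mul]
        exact add_le_add (hbound g hg) (hbound' g hg)

lemma of_factorization [SFinite μ] [SFinite ν] (hpp' : p.HolderConjugate p') (hpq : p ≤ q)
    {K₁ K₂ : X → Y → ℝ≥0∞} (hK₁ : Measurable (Function.uncurry K₁))
    (hK₂ : Measurable (Function.uncurry K₂)) {u v : X → ℝ≥0∞} (hu : Measurable u)
    (hv : Measurable v) {B : ℝ≥0∞} (hB : B ≠ ⊤)
    (hK₁u : ∀ᵐ x ∂μ, (∫⁻ y, K₁ x y ^ p' ∂ν) ^ (1 / p') ≤ u x)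
    (hK₂v : ∀ᵐ x ∂μ, ∀ᵐ y ∂ν, K₂ x y ≤ v x)
    (htest : ∀ᵐ y ∂ν, ∫⁻ x, u x ^ q * v x ^ (q - p) * K₂ x y ^ p ∂μ ≤ B) :
    IsBoundedKernel p q ν μ (fun x y => K₁ x y * K₂ x y) := by
  have hp := hpp'.pos
  have hq : 0 < q := hp.trans_le hpq
  have hqp : 0 ≤ (q - p) / p := div_nonneg (sub_nonneg.2 hpq) hp.le
  refine ⟨B ^ (1 / q), ENNReal.rpow_ne_top_of_nonneg (by positivity) hB, fun g hg => ?_⟩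
  set G := ∫⁻ y, g y ^ p ∂ν
  set w : X → ℝ≥0∞ := fun x => u x ^ q * v x ^ (q - p)
  have hw : Measurable w := by fun_prop
  have hK₂p : Measurable (Function.uncurry fun x y => K₂ x y ^ p) := hK₂.pow_const p
  have hJ : Measurable fun x => ∫⁻ y, K₂ x y ^ p * g y ^ p ∂ν :=
    (hK₂p.mul ((hg.comp measurable_snd).pow_const p)).lintegral_prod_right'
  have hpointwise : ∀ᵐ x ∂μ, (∫⁻ y, K₁ x y * K₂ x y * g y ∂ν) ^ q
      ≤ G ^ ((q - p) / p) * (w x * ∫⁻ y, K₂ x y ^ p * g y ^ p ∂ν) := by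
    filter_upwards [hK₁u, hK₂v] with x hux hvx
    exact rpow_lintegral_mul_mul_le hpp' hpq hK₁.of_uncurry_left.aemeasurable
      hK₂.of_uncurry_left.aemeasurable hg.aemeasurable hux hvx
  calc (∫⁻ x, (∫⁻ y, K₁ x y * K₂ x y * g y ∂ν) ^ q ∂μ) ^ (1 / q)
      ≤ (∫⁻ x, G ^ ((q - p) / p) * (w x * ∫⁻ y, K₂ x y ^ p * g y ^ p ∂ν) ∂μ) ^ (1 / q) :=
        ENNReal.rpow_le_rpow (lintegral_mono_ae hpointwise) (by positivity)
    _ = (G ^ ((q - p) / p) * ∫⁻ x, w x * ∫⁻ y, K₂ x y ^ p * g y ^ p ∂ν ∂μ) ^ (1 / q) := by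
        exact congrArg (· ^ (1 / q)) (lintegral_const_mul _ (hw.mul hJ))
    _ ≤ (G ^ ((q - p) / p) * (B * G)) ^ (1 / q) := by
        gcongr
        exact lintegral_mul_lintegral_mul_le hw hK₂p (hg.pow_const p) htest
    _ = (B * G ^ (q / p)) ^ (1 / q) := by
        have hexp : q / p = (q - p) / p + 1 := by field_simp; ring
        rw [hexp, ENNReal.rpow_add_of_nonneg _ _ hqp zero_le_one, ENNReal.rpow_one]
        ring_nf
    _ = B ^ (1 / q) * G ^ (1 / p) := by
        rw [ENNReal.mul_rpow_of_nonneg _ _ (by positivity), ← ENNReal.rpow_mul]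
        congr 2
        field_simp

lemma of_schur [SFinite μ] [SFinite ν] (hpp' : p.HolderConjugate p')
    (hK : Measurable (Function.uncurry K)) {A B : ℝ≥0∞} (hA : A ≠ ⊤) (hB : B ≠ ⊤)
    (hrow : ∀ᵐ x ∂μ, ∫⁻ y, K x y ∂ν ≤ A) (hcol : ∀ᵐ y ∂ν, ∫⁻ x, K x y ∂μ ≤ B) :
    IsBoundedKernel p p ν μ K := by
  have hp := hpp'.pos
  have hp' := hpp'.symm.pos
  have hfactor : K = fun x y => K x y ^ (1 / p') * K x y ^ (1 / p) := by
    ext x y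
    rw [← ENNReal.rpow_add_of_nonneg _ _ (by positivity) (by positivity), one_div, one_div,
      hpp'.symm.inv_add_inv_eq_one, ENNReal.rpow_one]
  have hcancel {r : ℝ} (hr : 0 < r) (a : ℝ≥0∞) : (a ^ (1 / r)) ^ r = a := by
    rw [one_div, ENNReal.rpow_inv_rpow hr.ne']
  rw [hfactor]
  refine of_factorization (u := fun _ => A ^ (1 / p')) (v := fun _ => ⊤)
    (B := A ^ (1 / p' * p) * B) hpp' le_rfl (hK.pow_const _) (hK.pow_const _) measurable_const
    measurable_const
    (ENNReal.mul_ne_top (ENNReal.rpow_ne_top_of_nonneg (by positivity) hA) hB) ?_ (by simp) ?_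
  · filter_upwards [hrow] with x hx
    simp_rw [hcancel hp']
    gcongr
  · filter_upwards [hcol] with y hy
    simp_rw [hcancel hp, sub_self, ENNReal.rpow_zero, mul_one, ← ENNReal.rpow_mul]
    rw [lintegral_const_mul _ hK.of_uncurry_right]
    gcongr

lemma of_normalized (hp : 0 < p) (hq : 0 < q) {C : ℝ≥0∞} (hC : C ≠ ⊤)
    (h : ∀ g : Y → ℝ≥0∞, Measurable g → ∫⁻ y, g y ^ p ∂ν = 1 →
      ∫⁻ x, (∫⁻ y, K x y * g y ∂ν) ^ q ∂μ ≤ C) : IsBoundedKernel p q ν μ K := by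
  refine ⟨(C + 1) ^ (1 / q), by finiteness, fun g hg => ?_⟩
  set G := ∫⁻ y, g y ^ p ∂ν
  rcases eq_or_ne G 0 with hG0 | hG0
  · have hKg (x : X) : ∫⁻ y, K x y * g y ∂ν = 0 := by
      refine lintegral_eq_zero_of_ae_eq_zero ?_
      filter_upwards [ENNReal.ae_eq_zero_of_lintegral_rpow_eq_zero hp.le hg.aemeasurable hG0]
        with y hy
      simp [hy]
    simp [hKg, hq]
  rcases eq_or_ne G ⊤ with hGtop | hGtop
  · have hCpos : (C + 1) ^ (1 / q) ≠ 0 := by simp [hq.le]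
    rw [hGtop, ENNReal.top_rpow_of_pos (by positivity), ENNReal.mul_top hCpos]
    exact le_top
  set c := G ^ (1 / p)
  have hc0 : c ≠ 0 := by simp [c, hG0, hGtop]
  have hctop : c ≠ ⊤ := by simp [c, hGtop, hp.le]
  have hcp : c ^ p = G := by simp only [c, one_div, ENNReal.rpow_inv_rpow hp.ne']
  have hnormalized : ∫⁻ y, (c⁻¹ * g y) ^ p ∂ν = 1 := by
    simp_rw [ENNReal.mul_rpow_of_nonneg _ _ hp.le]
    rw [lintegral_const_mul _ (hg.pow_const p), ENNReal.inv_rpow, hcp,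
      ENNReal.inv_mul_cancel hG0 hGtop]
  have hscale (x : X) : ∫⁻ y, K x y * g y ∂ν = c * ∫⁻ y, K x y * (c⁻¹ * g y) ∂ν := by
    rw [← lintegral_const_mul' _ _ hctop]
    refine lintegral_congr fun y => ?_
    rw [mul_left_comm, ← mul_assoc c, ENNReal.mul_inv_cancel hc0 hctop, one_mul]
  calc (∫⁻ x, (∫⁻ y, K x y * g y ∂ν) ^ q ∂μ) ^ (1 / q)
      = (c ^ q * ∫⁻ x, (∫⁻ y, K x y * (c⁻¹ * g y) ∂ν) ^ q ∂μ) ^ (1 / q) := by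
        simp_rw [hscale, ENNReal.mul_rpow_of_nonneg _ _ hq.le]
        rw [lintegral_const_mul' _ _ (ENNReal.rpow_ne_top_of_nonneg hq.le hctop)]
    _ ≤ (c ^ q * (C + 1)) ^ (1 / q) := by
        gcongr
        exact (h _ (hg.const_mul _) hnormalized).trans le_self_add
    _ = (C + 1) ^ (1 / q) * c := by
        rw [ENNReal.mul_rpow_of_nonneg _ _ (by positivity), one_div, ENNReal.rpow_rpow_inv hq.ne',
          mul_comm]

end IsBoundedKernel

end BoundedKernel

section LayerCake

variable {X Y : Type*} [MeasurableSpace X] [MeasurableSpace Y] {μ : Measure X} {ν : Measure Y}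

lemma lintegral_Ioi_ofReal_rpow_eq_top (s : ℝ) :
    ∫⁻ t in Set.Ioi (0 : ℝ), ENNReal.ofReal (t ^ s) = ⊤ := by
  by_contra h
  refine not_integrableOn_Ioi_rpow s ⟨by fun_prop, ?_⟩
  rw [hasFiniteIntegral_iff_ofReal]
  · exact Ne.lt_top h
  · filter_upwards [ae_restrict_mem measurableSet_Ioi] with t ht
    exact Real.rpow_nonneg (le_of_lt ht) s

lemma ennreal_lintegral_rpow_eq_lintegral_meas_lt_mul {F : X → ℝ≥0∞} (hF : AEMeasurable F μ)
    {k : ℝ} (hk : 0 < k) :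
    ∫⁻ x, F x ^ k ∂μ = ENNReal.ofReal k *
      ∫⁻ t in Set.Ioi (0 : ℝ), μ {x | ENNReal.ofReal t < F x} * ENNReal.ofReal (t ^ (k - 1)) := by
  by_cases hfin : ∀ᵐ x ∂μ, F x ≠ ⊤
  · have htoReal := lintegral_rpow_eq_lintegral_meas_lt_mul μ
      (ae_of_all _ fun x => ENNReal.toReal_nonneg) hF.ennreal_toReal hk
    convert htoReal using 1
    · refine lintegral_congr_ae ?_
      filter_upwards [hfin] with x hx
      rw [ENNReal.toReal_rpow, ENNReal.ofReal_toReal (ENNReal.rpow_ne_top_of_nonneg hk.le hx)]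
    · congr 1
      refine setLIntegral_congr_fun measurableSet_Ioi fun t ht => ?_
      congr 1
      refine measure_congr ?_
      filter_upwards [hfin] with x hx
      exact propext (ENNReal.ofReal_lt_iff_lt_toReal (le_of_lt ht) hx)
  · have htop : μ {x | F x = ⊤} ≠ 0 := by simpa [ae_iff] using hfin
    have hleft : ∫⁻ x, F x ^ k ∂μ = ⊤ := by
      by_contra h
      refine hfin ?_
      filter_upwards [ae_lt_top' (hF.pow_const k) h] with x hx hx'
      simp [hx', hk] at hx
    rw [hleft, eq_comm, ENNReal.mul_eq_top]
    refine Or.inl ⟨by simpa using hk, eq_top_iff.2 ?_⟩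
    calc (⊤ : ℝ≥0∞)
        = μ {x | F x = ⊤} * ∫⁻ t in Set.Ioi (0 : ℝ), ENNReal.ofReal (t ^ (k - 1)) := by
          rw [lintegral_Ioi_ofReal_rpow_eq_top, ENNReal.mul_top htop]
      _ = ∫⁻ t in Set.Ioi (0 : ℝ), μ {x | F x = ⊤} * ENNReal.ofReal (t ^ (k - 1)) :=
          (lintegral_const_mul _ (by fun_prop)).symm
      _ ≤ _ := by
          gcongr with t x
          intro hx
          simp [hx]

/-- Both sides are computed by layer cake, the right one for `g ^ (p / q)` and the measure `g ν`. -/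
lemma lintegral_rpow_le_of_measure_superlevel_le {p p' q : ℝ} (hpp' : p.HolderConjugate p')
    (hq : 0 < q) {F : X → ℝ≥0∞} {g : Y → ℝ≥0∞} (hF : AEMeasurable F μ) (hg : Measurable g)
    {C : ℝ≥0∞} (hC : C ≠ ⊤)
    (h : ∀ t : ℝ≥0∞, t ≠ 0 → t ≠ ⊤ →
      μ {x | t < F x} ≤ C * t ^ (-(q / p)) * ∫⁻ y in {y | t ^ (q / p) < g y}, g y ∂ν) :
    ∫⁻ x, F x ^ q ∂μ ≤ C * ENNReal.ofReal p' * ∫⁻ y, g y ^ p ∂ν := by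
  have hp := hpp'.pos
  have hp' := hpp'.symm.pos
  have hsuper (t : ℝ) :
      (ν.withDensity g) {y | ENNReal.ofReal t < g y ^ (p / q)}
        = ∫⁻ y in {y | ENNReal.ofReal t ^ (q / p) < g y}, g y ∂ν := by
    rw [withDensity_apply _ (measurableSet_lt measurable_const (hg.pow_const _))]
    simp_rw [← inv_div q p, ENNReal.lt_rpow_inv_iff (div_pos hq hp)]
  have hexp : q / p' = q - q / p := by
    rw [div_eq_mul_inv, ← hpp'.one_sub_inv, mul_sub, mul_one, ← div_eq_mul_inv]
  calc ∫⁻ x, F x ^ q ∂μ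
      = ENNReal.ofReal q * ∫⁻ t in Set.Ioi (0 : ℝ),
          μ {x | ENNReal.ofReal t < F x} * ENNReal.ofReal (t ^ (q - 1)) :=
        ennreal_lintegral_rpow_eq_lintegral_meas_lt_mul hF hq
    _ ≤ ENNReal.ofReal q * ∫⁻ t in Set.Ioi (0 : ℝ),
          C * ((ν.withDensity g) {y | ENNReal.ofReal t < g y ^ (p / q)} *
            ENNReal.ofReal (t ^ (q / p' - 1))) := by
        refine mul_le_mul_right (setLIntegral_mono' measurableSet_Ioi fun t ht => ?_) _
        have hT0 : ENNReal.ofReal t ≠ 0 := by simpa using ht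
        rw [hsuper t, ← ENNReal.ofReal_rpow_of_pos ht, ← ENNReal.ofReal_rpow_of_pos ht, hexp]
        refine (mul_le_mul_left (h _ hT0 ENNReal.ofReal_ne_top) _).trans_eq ?_
        rw [mul_right_comm, mul_assoc C, ← ENNReal.rpow_add _ _ hT0 ENNReal.ofReal_ne_top]
        ring_nf
    _ = C * ENNReal.ofReal p' * (ENNReal.ofReal (q / p') * ∫⁻ t in Set.Ioi (0 : ℝ),
          ((ν.withDensity g) {y | ENNReal.ofReal t < g y ^ (p / q)} *
            ENNReal.ofReal (t ^ (q / p' - 1)))) := by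
        rw [lintegral_const_mul' _ _ hC, mul_assoc C, ← mul_assoc (ENNReal.ofReal p'),
          ← ENNReal.ofReal_mul hp'.le, mul_div_cancel₀ _ hp'.ne', mul_left_comm]
    _ = C * ENNReal.ofReal p' * ∫⁻ y, (g y ^ (p / q)) ^ (q / p') ∂(ν.withDensity g) := by
        rw [ennreal_lintegral_rpow_eq_lintegral_meas_lt_mul (hg.pow_const _).aemeasurable
          (by positivity)]
    _ = C * ENNReal.ofReal p' * ∫⁻ y, g y ^ p ∂ν := by
        rw [lintegral_withDensity_eq_lintegral_mul _ hg (by fun_prop)]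
        congr 1
        refine lintegral_congr fun y => ?_
        have hpow : p / q * (q / p') = p - 1 := by
          rw [← hpp'.div_conj_eq_sub_one]
          field_simp
        nth_rw 1 [Pi.mul_apply, ← ENNReal.rpow_one (g y)]
        rw [← ENNReal.rpow_mul, hpow,
          ← ENNReal.rpow_add_of_nonneg _ _ zero_le_one hpp'.sub_one_pos.le, add_sub_cancel]

end LayerCake

section SplitKernel

variable {X Y : Type*} [MeasurableSpace X] [MeasurableSpace Y] {μ : Measure X} {ν : Measure Y}
  {p p' q : ℝ} {K K₀ K₁ : X → Y → ℝ≥0∞}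

lemma lintegral_mul_le_add_setLIntegral (hpp' : p.HolderConjugate p') {k k₀ k₁ g : Y → ℝ≥0∞}
    (hk₀ : Measurable k₀) (hk₁ : Measurable k₁) (hg : Measurable g)
    (hk : ∀ y, k y ≤ k₀ y + k₁ y) (hg1 : ∫⁻ y, g y ^ p ∂ν ≤ 1) (τ : ℝ≥0∞) :
    ∫⁻ y, k y * g y ∂ν ≤ (∫⁻ y, k₁ y ^ p' ∂ν) ^ (1 / p') + τ * ∫⁻ y, k₀ y ∂ν
      + ∫⁻ y, k₀ y * {y | τ < g y}.indicator g y ∂ν := by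
  have hp := hpp'.pos
  have htruncate (y : Y) : g y ≤ τ + {y | τ < g y}.indicator g y := by
    by_cases hy : τ < g y
    · rw [Set.indicator_of_mem (by exact hy)]
      exact le_add_self
    · exact (not_lt.1 hy).trans le_self_add
  have hk₁g : Measurable fun y => k₁ y * g y := hk₁.mul hg
  have hHolder : ∫⁻ y, k₁ y * g y ∂ν ≤ (∫⁻ y, k₁ y ^ p' ∂ν) ^ (1 / p') := by
    refine (ENNReal.lintegral_mul_le_Lp_mul_Lq ν hpp'.symm hk₁.aemeasurable
      hg.aemeasurable).trans ?_
    exact mul_le_of_le_one_right' (ENNReal.rpow_le_one hg1 (by positivity))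
  calc ∫⁻ y, k y * g y ∂ν
      ≤ ∫⁻ y, (k₁ y * g y + (τ * k₀ y + k₀ y * {y | τ < g y}.indicator g y)) ∂ν := by
        refine lintegral_mono fun y => ?_
        calc k y * g y ≤ (k₀ y + k₁ y) * g y := by gcongr; exact hk y
          _ = k₁ y * g y + k₀ y * g y := by ring
          _ ≤ k₁ y * g y + k₀ y * (τ + {y | τ < g y}.indicator g y) := by
              gcongr; exact htruncate y
          _ = _ := by ring
    _ = ∫⁻ y, k₁ y * g y ∂ν
          + (τ * ∫⁻ y, k₀ y ∂ν + ∫⁻ y, k₀ y * {y | τ < g y}.indicator g y ∂ν) := by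
        rw [lintegral_add_left hk₁g, lintegral_add_left (hk₀.const_mul τ),
          lintegral_const_mul _ hk₀]
    _ ≤ _ := by
        rw [← add_assoc]
        gcongr

lemma measure_superlevel_le_of_split [SFinite μ] [SFinite ν] (hpp' : p.HolderConjugate p')
    (hK₀ : Measurable (Function.uncurry K₀)) (hK₁ : Measurable (Function.uncurry K₁))
    (hK : ∀ x y, K x y ≤ K₀ x y + K₁ x y) {A₀ A₁ : ℝ≥0∞}
    (hrow₁ : ∀ x, (∫⁻ y, K₁ x y ^ p' ∂ν) ^ (1 / p') ≤ A₁) (hrow₀ : ∀ x, ∫⁻ y, K₀ x y ∂ν ≤ A₀)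
    (hcol₀ : ∀ y, ∫⁻ x, K₀ x y ∂μ ≤ A₀) {g : Y → ℝ≥0∞} (hg : Measurable g)
    (hg1 : ∫⁻ y, g y ^ p ∂ν ≤ 1) (τ : ℝ≥0∞) {t : ℝ≥0∞} (ht0 : t ≠ 0) (ht : t ≠ ⊤) :
    μ {x | A₁ + τ * A₀ + t < ∫⁻ y, K x y * g y ∂ν}
      ≤ A₀ / t * ∫⁻ y in {y | τ < g y}, g y ∂ν := by
  have hsuper : MeasurableSet {y | τ < g y} := measurableSet_lt measurable_const hg
  have hgτ : Measurable ({y | τ < g y}.indicator g) := hg.indicator hsuper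
  have hK₀g : Measurable fun x => ∫⁻ y, K₀ x y * {y | τ < g y}.indicator g y ∂ν :=
    (hK₀.mul (hgτ.comp measurable_snd)).lintegral_prod_right'
  calc μ {x | A₁ + τ * A₀ + t < ∫⁻ y, K x y * g y ∂ν}
      ≤ μ {x | t ≤ ∫⁻ y, K₀ x y * {y | τ < g y}.indicator g y ∂ν} := by
        refine measure_mono fun x hx => show t ≤ _ from le_of_not_gt fun hlt => ?_
        refine (lt_irrefl (A₁ + τ * A₀ + t)) (lt_of_lt_of_le hx ?_)
        refine (lintegral_mul_le_add_setLIntegral hpp' hK₀.of_uncurry_left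
          hK₁.of_uncurry_left hg (hK x) hg1 τ).trans ?_
        gcongr
        exacts [hrow₁ x, hrow₀ x]
    _ ≤ (∫⁻ x, ∫⁻ y, K₀ x y * {y | τ < g y}.indicator g y ∂ν ∂μ) / t :=
        meas_ge_le_lintegral_div hK₀g.aemeasurable ht0 ht
    _ ≤ (A₀ * ∫⁻ y, {y | τ < g y}.indicator g y ∂ν) / t := by
        gcongr
        simpa using lintegral_mul_lintegral_mul_le (w := fun _ => 1) measurable_const hK₀ hgτ
          (B := A₀) (ae_of_all _ fun y => by simpa using hcol₀ y)
    _ = A₀ / t * ∫⁻ y in {y | τ < g y}, g y ∂ν := by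
        rw [lintegral_indicator hsuper, ENNReal.mul_div_right_comm]

/-- The exponents are those for which truncating `g` at height `t ^ (q / p)` makes every error term
at level `t` comparable to `t`. -/
lemma IsBoundedKernel.of_split [SFinite μ] [SFinite ν] (hpp' : p.HolderConjugate p') (hq : 0 < q)
    (hKm : Measurable (Function.uncurry K)) {A : ℝ≥0∞} (hA : A ≠ ⊤)
    (hsplit : ∀ t : ℝ≥0∞, t ≠ 0 → t ≠ ⊤ → ∃ K₀ K₁ : X → Y → ℝ≥0∞,
      Measurable (Function.uncurry K₀) ∧ Measurable (Function.uncurry K₁) ∧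
      (∀ x y, K x y ≤ K₀ x y + K₁ x y) ∧ (∀ x, (∫⁻ y, K₁ x y ^ p' ∂ν) ^ (1 / p') ≤ A * t) ∧
      (∀ x, ∫⁻ y, K₀ x y ∂ν ≤ A * t ^ (1 - q / p)) ∧
      (∀ y, ∫⁻ x, K₀ x y ∂μ ≤ A * t ^ (1 - q / p))) :
    IsBoundedKernel p q ν μ K := by
  have hp := hpp'.pos
  have hMtop : 2 * A + 1 ≠ ⊤ := by finiteness
  have hM0 : 2 * A + 1 ≠ 0 := by simp
  refine of_normalized hp hq (C := (2 * A + 1) ^ q * (A * ENNReal.ofReal p'))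
    (by finiteness) fun g hg hg1 => ?_
  set F : X → ℝ≥0∞ := fun x => ∫⁻ y, K x y * g y ∂ν
  have hF : Measurable F := (hKm.mul (hg.comp measurable_snd)).lintegral_prod_right'
  have hlevel (t : ℝ≥0∞) (ht0 : t ≠ 0) (ht : t ≠ ⊤) : μ {x | t < F x / (2 * A + 1)}
      ≤ A * t ^ (-(q / p)) * ∫⁻ y in {y | t ^ (q / p) < g y}, g y ∂ν := by
    obtain ⟨K₀, K₁, hK₀, hK₁, hK, hrow₁, hrow₀, hcol₀⟩ := hsplit t ht0 ht
    have hbound := measure_superlevel_le_of_split hpp' hK₀ hK₁ hK hrow₁ hrow₀ hcol₀ hg hg1.le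
      (t ^ (q / p)) ht0 ht
    have hthreshold : A * t + t ^ (q / p) * (A * t ^ (1 - q / p)) + t = t * (2 * A + 1) := by
      rw [mul_left_comm, ← ENNReal.rpow_add _ _ ht0 ht, add_sub_cancel, ENNReal.rpow_one]
      ring
    have hweight : A * t ^ (1 - q / p) / t = A * t ^ (-(q / p)) := by
      rw [mul_div_assoc, ENNReal.div_eq_inv_mul, ← ENNReal.rpow_neg_one,
        ← ENNReal.rpow_add _ _ ht0 ht]
      ring_nf
    simpa only [hthreshold, hweight, ENNReal.lt_div_iff_mul_lt (Or.inl hM0) (Or.inl hMtop)]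
      using hbound
  calc ∫⁻ x, F x ^ q ∂μ
      = ∫⁻ x, (2 * A + 1) ^ q * (F x / (2 * A + 1)) ^ q ∂μ := by
        simp_rw [← ENNReal.mul_rpow_of_nonneg _ _ hq.le, ENNReal.mul_div_cancel hM0 hMtop]
    _ = (2 * A + 1) ^ q * ∫⁻ x, (F x / (2 * A + 1)) ^ q ∂μ :=
        lintegral_const_mul _ (by fun_prop)
    _ ≤ (2 * A + 1) ^ q * (A * ENNReal.ofReal p' * ∫⁻ y, g y ^ p ∂ν) := by
        gcongr
        exact lintegral_rpow_le_of_measure_superlevel_le hpp' hq (by fun_prop) hg hA hlevel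
    _ = (2 * A + 1) ^ q * (A * ENNReal.ofReal p') := by rw [hg1, mul_one]

end SplitKernel

section PowerIntegrals

open Module (finrank)

variable {E : Type*} [NormedAddCommGroup E] [NormedSpace ℝ E] [FiniteDimensional ℝ E]
  [MeasurableSpace E] [BorelSpace E] (μ : Measure E) [μ.IsAddHaarMeasure]

lemma setLIntegral_enorm_rpow_scaling (S : Set ℝ≥0∞) (s : ℝ) {r : ℝ≥0∞} (hr0 : r ≠ 0)
    (hr : r ≠ ⊤) :
    ∫⁻ y in {y | ‖y‖ₑ / r ∈ S}, ‖y‖ₑ ^ (-s) ∂μ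
      = (∫⁻ y in {y | ‖y‖ₑ ∈ S}, ‖y‖ₑ ^ (-s) ∂μ) * r ^ ((finrank ℝ E : ℝ) - s) := by
  have hρ : 0 < r.toReal := ENNReal.toReal_pos hr0 hr
  have henorm (y : E) : ‖r.toReal • y‖ₑ = r * ‖y‖ₑ := by
    rw [enorm_smul, Real.enorm_eq_ofReal hρ.le, ENNReal.ofReal_toReal hr]
  have hdilation : MeasurableEmbedding fun y : E => r.toReal • y :=
    measurableEmbedding_const_smul₀ hρ.ne'
  have hcancel (a : ℝ≥0∞) : r * a / r = a := by
    rw [mul_comm, ENNReal.mul_div_cancel_right hr0 hr]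
  have hμ : μ = r ^ (finrank ℝ E : ℝ) • μ.map (fun y => r.toReal • y) := by
    rw [Measure.map_addHaar_smul μ hρ.ne', smul_smul, abs_of_nonneg (by positivity),
      ENNReal.ofReal_inv_of_pos (by positivity), ENNReal.ofReal_pow hρ.le,
      ENNReal.ofReal_toReal hr, ENNReal.rpow_natCast,
      ENNReal.mul_inv_cancel (by simp [hr0]) (by finiteness), one_smul]
  calc ∫⁻ y in {y | ‖y‖ₑ / r ∈ S}, ‖y‖ₑ ^ (-s) ∂μ
      = r ^ (finrank ℝ E : ℝ) *
          ∫⁻ y in {y | ‖y‖ₑ / r ∈ S}, ‖y‖ₑ ^ (-s) ∂(μ.map fun y => r.toReal • y) := by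
        rw [← smul_eq_mul, ← lintegral_smul_measure, ← Measure.restrict_smul, ← hμ]
    _ = r ^ (finrank ℝ E : ℝ) * ∫⁻ y in {y | ‖y‖ₑ ∈ S}, r ^ (-s) * ‖y‖ₑ ^ (-s) ∂μ := by
        rw [hdilation.restrict_map, hdilation.lintegral_map]
        simp only [Set.preimage_ofPred_eq, henorm, hcancel,
          ENNReal.mul_rpow_of_ne_top hr enorm_ne_top]
    _ = (∫⁻ y in {y | ‖y‖ₑ ∈ S}, ‖y‖ₑ ^ (-s) ∂μ) * r ^ ((finrank ℝ E : ℝ) - s) := by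
        rw [lintegral_const_mul _ (by fun_prop), ← mul_assoc, ← ENNReal.rpow_add _ _ hr0 hr,
          ← sub_eq_add_neg, mul_comm]

variable [Nontrivial E]

variable {μ} in
lemma setLIntegral_enorm_rpow_ne_top_of_integrableOn {A : Set E} {s : ℝ}
    (h : IntegrableOn (fun y => ‖y‖ ^ s) A μ) : ∫⁻ y in A, ‖y‖ₑ ^ s ∂μ ≠ ⊤ := by
  convert h.hasFiniteIntegral.ne using 1
  refine lintegral_congr_ae (ae_restrict_of_ae ?_)
  filter_upwards [Measure.ae_ne μ 0] with y hy
  rw [Real.enorm_eq_ofReal (by positivity), ← ENNReal.ofReal_rpow_of_pos (norm_pos_iff.2 hy),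
    ofReal_norm]

lemma setLIntegral_enorm_le_one_rpow_ne_top {s : ℝ} (hs : s < finrank ℝ E) :
    ∫⁻ y in {y : E | ‖y‖ₑ ≤ 1}, ‖y‖ₑ ^ (-s) ∂μ ≠ ⊤ := by
  have hball : IntegrableOn (fun y : E => ‖y‖ ^ (-s)) (Metric.ball 0 2) μ := by
    refine integrableOn_ball_of_norm_le_rpow (C := 1) Module.finrank_pos hs
      (ae_of_all _ fun y => ?_) (measurable_norm.pow_const _).aestronglyMeasurable
    rw [one_mul, Real.norm_of_nonneg (by positivity)]
  refine setLIntegral_enorm_rpow_ne_top_of_integrableOn (hball.mono_set fun y hy => ?_)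
  have : ‖y‖ ≤ 1 := by simpa [← ofReal_norm] using hy
  simpa using this.trans_lt one_lt_two

lemma setLIntegral_one_le_enorm_rpow_ne_top {s : ℝ} (hs : finrank ℝ E < s) :
    ∫⁻ y in {y : E | 1 ≤ ‖y‖ₑ}, ‖y‖ₑ ^ (-s) ∂μ ≠ ⊤ := by
  have hs0 : 0 < s := (Nat.cast_nonneg _).trans_lt hs
  refine setLIntegral_enorm_rpow_ne_top_of_integrableOn ?_
  refine ((integrable_one_add_norm hs).const_mul (2 ^ s)).integrableOn.mono'
    (measurable_norm.pow_const _).aestronglyMeasurable ?_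
  filter_upwards [ae_restrict_mem (measurableSet_le measurable_const measurable_enorm)] with y hy
  have hy1 : 1 ≤ ‖y‖ := by simpa [← ofReal_norm] using hy
  calc ‖‖y‖ ^ (-s)‖ = 2 ^ s * (2 * ‖y‖) ^ (-s) := by
        rw [Real.norm_of_nonneg (by positivity), Real.mul_rpow zero_le_two (norm_nonneg y),
          ← mul_assoc, ← Real.rpow_add two_pos, add_neg_cancel, Real.rpow_zero, one_mul]
    _ ≤ 2 ^ s * (1 + ‖y‖) ^ (-s) := by
        gcongr ?_ * ?_
        exact Real.rpow_le_rpow_of_nonpos (by positivity) (by linarith) (neg_nonpos.2 hs0.le)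

lemma exists_setLIntegral_enorm_le_rpow {s : ℝ} (hs : s < finrank ℝ E) :
    ∃ C : ℝ≥0∞, C ≠ ⊤ ∧ ∀ r : ℝ≥0∞, r ≠ 0 → r ≠ ⊤ →
      ∫⁻ y in {y : E | ‖y‖ₑ ≤ r}, ‖y‖ₑ ^ (-s) ∂μ ≤ C * r ^ ((finrank ℝ E : ℝ) - s) := by
  refine ⟨_, setLIntegral_enorm_le_one_rpow_ne_top μ hs, fun r hr0 hr => ?_⟩
  have := setLIntegral_enorm_rpow_scaling μ (Set.Iic 1) s hr0 hr
  simp only [Set.mem_Iic, ENNReal.div_le_iff hr0 hr, one_mul] at this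
  exact this.le

lemma exists_setLIntegral_le_enorm_rpow {s : ℝ} (hs : finrank ℝ E < s) :
    ∃ C : ℝ≥0∞, C ≠ ⊤ ∧ ∀ r : ℝ≥0∞, r ≠ 0 → r ≠ ⊤ →
      ∫⁻ y in {y : E | r ≤ ‖y‖ₑ}, ‖y‖ₑ ^ (-s) ∂μ ≤ C * r ^ ((finrank ℝ E : ℝ) - s) := by
  refine ⟨_, setLIntegral_one_le_enorm_rpow_ne_top μ hs, fun r hr0 hr => ?_⟩
  have := setLIntegral_enorm_rpow_scaling μ (Set.Ici 1) s hr0 hr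
  simp only [Set.mem_Ici, ENNReal.le_div_iff_mul_le (Or.inl hr0) (Or.inl hr), one_mul] at this
  exact this.le

lemma exists_rpow_setLIntegral_compl_enorm_le {s r : ℝ} (hr : 0 < r) (hs : finrank ℝ E < s * r) :
    ∃ C : ℝ≥0∞, C ≠ ⊤ ∧ ∀ ρ : ℝ≥0∞, ρ ≠ 0 → ρ ≠ ⊤ →
      (∫⁻ y in {y : E | ‖y‖ₑ ≤ ρ}ᶜ, (‖y‖ₑ ^ (-s)) ^ r ∂μ) ^ (1 / r)
        ≤ C * ρ ^ (finrank ℝ E / r - s) := by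
  obtain ⟨C, hC, hfar⟩ := exists_setLIntegral_le_enorm_rpow μ hs
  refine ⟨C ^ (1 / r), by finiteness, fun ρ hρ0 hρ => ?_⟩
  have hexp : ((finrank ℝ E : ℝ) - s * r) * (1 / r) = finrank ℝ E / r - s := by field_simp
  calc (∫⁻ y in {y : E | ‖y‖ₑ ≤ ρ}ᶜ, (‖y‖ₑ ^ (-s)) ^ r ∂μ) ^ (1 / r)
      ≤ (∫⁻ y in {y : E | ρ ≤ ‖y‖ₑ}, ‖y‖ₑ ^ (-(s * r)) ∂μ) ^ (1 / r) := by
        simp_rw [← ENNReal.rpow_mul, neg_mul]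
        gcongr
        exact fun y hy => (le_total ‖y‖ₑ ρ).resolve_left hy
    _ ≤ (C * ρ ^ ((finrank ℝ E : ℝ) - s * r)) ^ (1 / r) := by gcongr; exact hfar ρ hρ0 hρ
    _ = C ^ (1 / r) * ρ ^ (finrank ℝ E / r - s) := by
        rw [ENNReal.mul_rpow_of_nonneg _ _ (by positivity), ← ENNReal.rpow_mul, hexp]

end PowerIntegrals

section HardyLittlewoodSobolev

open Module (finrank)

lemma IsBoundedKernel.of_split_sub {G : Type*} [AddCommGroup G] [MeasurableSpace G]
    [MeasurableAdd₂ G] [MeasurableNeg G] {μ : Measure G} [SFinite μ] [μ.IsAddLeftInvariant]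
    [μ.IsNegInvariant] {p p' q : ℝ} (hpp' : p.HolderConjugate p') (hq : 0 < q) {k : G → ℝ≥0∞}
    (hk : Measurable k) {A : ℝ≥0∞} (hA : A ≠ ⊤)
    (hsplit : ∀ t : ℝ≥0∞, t ≠ 0 → t ≠ ⊤ → ∃ S : Set G, MeasurableSet S ∧
      ∫⁻ z in S, k z ∂μ ≤ A * t ^ (1 - q / p) ∧ (∫⁻ z in Sᶜ, k z ^ p' ∂μ) ^ (1 / p') ≤ A * t) :
    IsBoundedKernel p q μ μ (fun x y => k (x - y)) := by
  have hsub : Measurable fun z : G × G => z.1 - z.2 := measurable_fst.sub measurable_snd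
  refine .of_split hpp' hq (hk.comp hsub) hA fun t ht0 ht => ?_
  obtain ⟨S, hS, hint, hintc⟩ := hsplit t ht0 ht
  rw [← lintegral_indicator hS] at hint
  rw [← lintegral_indicator hS.compl] at hintc
  have hpow (z : G) : Sᶜ.indicator k z ^ p' = Sᶜ.indicator (fun z => k z ^ p') z := by
    by_cases hz : z ∈ S <;> simp [hz, hpp'.symm.pos]
  refine ⟨fun x y => S.indicator k (x - y), fun x y => Sᶜ.indicator k (x - y),
    (hk.indicator hS).comp hsub, (hk.indicator hS.compl).comp hsub,
    fun x y => (Set.indicator_self_add_compl_apply S k _).ge, fun x => ?_, fun x => ?_, fun y => ?_⟩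
  · simp_rw [hpow]
    rwa [lintegral_sub_left_eq_self (Sᶜ.indicator fun z => k z ^ p') x]
  · rwa [lintegral_sub_left_eq_self (S.indicator k) x]
  · rwa [lintegral_sub_right_eq_self (S.indicator k) y]

variable {E : Type*} [NormedAddCommGroup E] [NormedSpace ℝ E] [FiniteDimensional ℝ E]
  [MeasurableSpace E] [BorelSpace E] (μ : Measure E) [μ.IsAddHaarMeasure] [Nontrivial E]

lemma isBoundedKernel_enorm_sub_rpow {p p' q lam : ℝ} (hpp' : p.HolderConjugate p') (hpq : p < q)
    (hlam : lam = finrank ℝ E / q + finrank ℝ E / p') :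
    IsBoundedKernel p q μ μ (fun x y : E => ‖x - y‖ₑ ^ (-lam)) := by
  set d : ℝ := (finrank ℝ E : ℝ) with hd_def
  have hd : 0 < d := Nat.cast_pos.2 Module.finrank_pos
  have hp := hpp'.pos
  have hp' := hpp'.symm.pos
  have hq := hp.trans hpq
  have hconj : d / p' = d - d / p := by
    rw [div_eq_mul_inv, ← hpp'.one_sub_inv, mul_sub, mul_one, ← div_eq_mul_inv]
  have hnear_exp : lam < d := by
    have : d / q < d / p := div_lt_div_of_pos_left hd hp hpq
    linarith
  have hfar_exp : d < lam * p' := by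
    rw [hlam, add_mul, div_mul_cancel₀ _ hp'.ne']
    exact lt_add_of_pos_left d (by positivity)
  obtain ⟨C₀, hC₀, hnear⟩ := exists_setLIntegral_enorm_le_rpow μ hnear_exp
  obtain ⟨C₁, hC₁, hfar⟩ := exists_rpow_setLIntegral_compl_enorm_le μ hp' hfar_exp
  rw [← hd_def] at hnear hfar
  refine .of_split_sub hpp' hq (measurable_enorm.pow_const (-lam)) (A := C₀ + C₁) (by finiteness)
    fun t ht0 ht => ?_
  set r := t ^ (-(q / d))
  have hr0 : r ≠ 0 := by simp [r, ht0, ht]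
  have hr : r ≠ ⊤ := by simp [r, ht0, ht]
  refine ⟨{z | ‖z‖ₑ ≤ r}, measurableSet_le measurable_enorm measurable_const, ?_, ?_⟩
  · have hexp : -(q / d) * (d - lam) = 1 - q / p := by
      rw [hlam, hconj]; field_simp; ring
    calc ∫⁻ z in {z | ‖z‖ₑ ≤ r}, ‖z‖ₑ ^ (-lam) ∂μ
        ≤ C₀ * r ^ (d - lam) := hnear r hr0 hr
      _ = C₀ * t ^ (1 - q / p) := by rw [← ENNReal.rpow_mul, hexp]
      _ ≤ (C₀ + C₁) * t ^ (1 - q / p) := by gcongr; exact le_self_add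
  · have hexp : -(q / d) * (d / p' - lam) = 1 := by
      rw [hlam]; field_simp; ring
    calc (∫⁻ z in {z | ‖z‖ₑ ≤ r}ᶜ, (‖z‖ₑ ^ (-lam)) ^ p' ∂μ) ^ (1 / p')
        ≤ C₁ * r ^ (d / p' - lam) := hfar r hr0 hr
      _ = C₁ * t := by rw [← ENNReal.rpow_mul, hexp, ENNReal.rpow_one]
      _ ≤ (C₀ + C₁) * t := by gcongr; exact le_add_self

end HardyLittlewoodSobolev

section Comparison

lemma ennreal_rpow_le_rpow_of_nonpos {u v : ℝ≥0∞} {e : ℝ} (he : e ≤ 0) (h : u ≤ v) :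
    v ^ e ≤ u ^ e := by
  rw [← neg_neg e, ENNReal.rpow_neg v, ENNReal.rpow_neg u]
  exact ENNReal.inv_le_inv.2 (ENNReal.rpow_le_rpow h (neg_nonneg.2 he))

lemma ennreal_rpow_neg_le_of_le_mul {u v c : ℝ≥0∞} {e : ℝ} (he : 0 ≤ e) (hc0 : c ≠ 0) (hc : c ≠ ⊤)
    (hv : v ≠ ⊤) (h : u ≤ c * v) : v ^ (-e) ≤ c ^ e * u ^ (-e) := by
  calc v ^ (-e) = c ^ e * (c * v) ^ (-e) := by
        rw [ENNReal.mul_rpow_of_ne_top hc hv, ← mul_assoc, ← ENNReal.rpow_add _ _ hc0 hc,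
          add_neg_cancel, ENNReal.rpow_zero, one_mul]
    _ ≤ c ^ e * u ^ (-e) := by
        gcongr c ^ e * ?_
        exact ennreal_rpow_le_rpow_of_nonpos (neg_nonpos.2 he) h

lemma ennreal_rpow_neg_le_of_comparable {u v c : ℝ≥0∞} (e : ℝ) (hc0 : c ≠ 0) (hc : c ≠ ⊤)
    (hu : u ≠ ⊤) (huv : u ≤ c * v) (hvu : v ≤ c * u) : u ^ (-e) ≤ c ^ |e| * v ^ (-e) := by
  rcases le_total 0 e with he | he
  · rw [abs_of_nonneg he]
    exact ennreal_rpow_neg_le_of_le_mul he hc0 hc hu hvu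
  · have he' : 0 ≤ -e := neg_nonneg.2 he
    rw [abs_of_nonpos he, ← ENNReal.mul_rpow_of_nonneg _ _ he']
    exact ENNReal.rpow_le_rpow huv he'

lemma enorm_le_two_mul_enorm_sub {E : Type*} [NormedAddCommGroup E] {x y : E}
    (h : 2 * ‖y‖ₑ ≤ ‖x‖ₑ) : ‖x‖ₑ ≤ 2 * ‖x - y‖ₑ := by
  refine ENNReal.le_of_add_le_add_right (enorm_ne_top (x := x)) ?_
  calc ‖x‖ₑ + ‖x‖ₑ = 2 * ‖x - y + y‖ₑ := by rw [sub_add_cancel, two_mul]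
    _ ≤ 2 * (‖x - y‖ₑ + ‖y‖ₑ) := by gcongr; exact enorm_add_le (x - y) y
    _ ≤ 2 * ‖x - y‖ₑ + ‖x‖ₑ := by rw [mul_add]; gcongr

end Comparison

section HardyKernels

open Module (finrank)

variable {E : Type*} [NormedAddCommGroup E] {S : Set (E × E)} {a b s : ℝ} {x y : E}

/-- The kernel `‖x‖ ^ (-a) * ‖y‖ ^ (-b)` restricted to the pairs `(x, y)` in the region `S`; with
`S = {‖y‖ ≤ ‖x‖}` or its mirror image it is the kernel of a weighted Hardy operator. -/
noncomputable def powerKernel (S : Set (E × E)) (a b : ℝ) (x y : E) : ℝ≥0∞ :=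
  S.indicator (fun z => ‖z.1‖ₑ ^ (-a) * ‖z.2‖ₑ ^ (-b)) (x, y)

lemma powerKernel_of_mem (h : (x, y) ∈ S) : powerKernel S a b x y = ‖x‖ₑ ^ (-a) * ‖y‖ₑ ^ (-b) :=
  Set.indicator_of_mem h _

lemma powerKernel_of_notMem (h : (x, y) ∉ S) : powerKernel S a b x y = 0 :=
  Set.indicator_of_notMem h _

lemma powerKernel_rpow {r : ℝ} (hr : 0 < r) :
    powerKernel S a b x y ^ r = powerKernel S (a * r) (b * r) x y := by
  by_cases h : (x, y) ∈ S
  · simp only [powerKernel_of_mem h, ENNReal.mul_rpow_of_nonneg _ _ hr.le, ← ENNReal.rpow_mul,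
      neg_mul]
  · simp only [powerKernel_of_notMem h, ENNReal.zero_rpow_of_pos hr]

lemma powerKernel_mul_powerKernel_zero (hy : y ≠ 0) :
    powerKernel S a (b + s) x y * powerKernel S 0 (-s) x y = powerKernel S a b x y := by
  by_cases h : (x, y) ∈ S
  · simp only [powerKernel_of_mem h, neg_zero, ENNReal.rpow_zero, one_mul, mul_assoc]
    rw [← ENNReal.rpow_add _ _ (enorm_ne_zero.2 hy) enorm_ne_top]
    ring_nf
  · simp only [powerKernel_of_notMem h, mul_zero]

lemma mul_powerKernel_zero_rpow {p q e : ℝ} {c : ℝ≥0∞} (hp : 0 < p) (hq : 0 < q) (hx : x ≠ 0) :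
    (c * ‖x‖ₑ ^ (-(e + s))) ^ q * (‖x‖ₑ ^ s) ^ (q - p) * powerKernel S 0 (-s) x y ^ p
      = c ^ q * powerKernel S (e * q + s * p) (-(s * p)) x y := by
  rw [powerKernel_rpow hp, ENNReal.mul_rpow_of_nonneg _ _ hq.le, mul_assoc, mul_assoc]
  by_cases h : (x, y) ∈ S
  · simp only [powerKernel_of_mem h, ← mul_assoc, zero_mul, neg_zero, ENNReal.rpow_zero, mul_one,
      neg_mul, ← ENNReal.rpow_mul]
    rw [mul_assoc (c ^ q), ← ENNReal.rpow_add _ _ (enorm_ne_zero.2 hx) enorm_ne_top]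
    ring_nf
  · simp only [powerKernel_of_notMem h, mul_zero]

variable [MeasurableSpace E] [BorelSpace E]

lemma lintegral_powerKernel_right (μ : Measure E) (hS : MeasurableSet S) :
    ∫⁻ y, powerKernel S a b x y ∂μ
      = ‖x‖ₑ ^ (-a) * ∫⁻ y in {y | (x, y) ∈ S}, ‖y‖ₑ ^ (-b) ∂μ := by
  rw [← lintegral_const_mul _ (by fun_prop)]
  exact lintegral_indicator (measurable_prodMk_left hS) fun y => ‖x‖ₑ ^ (-a) * ‖y‖ₑ ^ (-b)

lemma lintegral_powerKernel_left (μ : Measure E) (hS : MeasurableSet S) :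
    ∫⁻ x, powerKernel S a b x y ∂μ
      = (∫⁻ x in {x | (x, y) ∈ S}, ‖x‖ₑ ^ (-a) ∂μ) * ‖y‖ₑ ^ (-b) := by
  rw [← lintegral_mul_const _ (by fun_prop)]
  exact lintegral_indicator (measurable_prodMk_right hS) fun x => ‖x‖ₑ ^ (-a) * ‖y‖ₑ ^ (-b)

lemma lintegral_powerKernel_rpow_le {μ : Measure E} (hS : MeasurableSet S) {r d : ℝ} (hr : 0 < r)
    (hx : x ≠ 0) {A : ℝ≥0∞}
    (hA : ∫⁻ y in {y | (x, y) ∈ S}, ‖y‖ₑ ^ (-(b * r)) ∂μ ≤ A * ‖x‖ₑ ^ (d - b * r)) :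
    (∫⁻ y, powerKernel S a b x y ^ r ∂μ) ^ (1 / r) ≤ A ^ (1 / r) * ‖x‖ₑ ^ (d / r - (a + b)) := by
  have hexp : (-(a * r) + (d - b * r)) * (1 / r) = d / r - (a + b) := by field_simp; ring
  calc (∫⁻ y, powerKernel S a b x y ^ r ∂μ) ^ (1 / r)
      = (‖x‖ₑ ^ (-(a * r)) * ∫⁻ y in {y | (x, y) ∈ S}, ‖y‖ₑ ^ (-(b * r)) ∂μ) ^ (1 / r) := by
        simp_rw [powerKernel_rpow hr, lintegral_powerKernel_right μ hS]
    _ ≤ (‖x‖ₑ ^ (-(a * r)) * (A * ‖x‖ₑ ^ (d - b * r))) ^ (1 / r) := by gcongr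
    _ = A ^ (1 / r) * ‖x‖ₑ ^ (d / r - (a + b)) := by
        rw [mul_left_comm, ← ENNReal.rpow_add _ _ (enorm_ne_zero.2 hx) enorm_ne_top,
          ENNReal.mul_rpow_of_nonneg _ _ (by positivity), ← ENNReal.rpow_mul, hexp]

variable [NormedSpace ℝ E] [FiniteDimensional ℝ E]

lemma measurable_powerKernel (hS : MeasurableSet S) (a b : ℝ) :
    Measurable (Function.uncurry (powerKernel S a b)) :=
  Measurable.indicator (by fun_prop) hS

variable (μ : Measure E) [μ.IsAddHaarMeasure] [Nontrivial E] {p p' q : ℝ}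

variable {μ} in
lemma lintegral_mul_powerKernel_zero_rpow_le (hS : MeasurableSet S) (hp : 0 < p) (hq : 0 < q)
    (hy : y ≠ 0) {e : ℝ} {c B : ℝ≥0∞}
    (hB : ∫⁻ x in {x | (x, y) ∈ S}, ‖x‖ₑ ^ (-(e * q + s * p)) ∂μ ≤ B * ‖y‖ₑ ^ (-(s * p))) :
    ∫⁻ x, (c * ‖x‖ₑ ^ (-(e + s))) ^ q * (‖x‖ₑ ^ s) ^ (q - p) * powerKernel S 0 (-s) x y ^ p ∂μ
      ≤ c ^ q * B := by
  calc ∫⁻ x, (c * ‖x‖ₑ ^ (-(e + s))) ^ q * (‖x‖ₑ ^ s) ^ (q - p) * powerKernel S 0 (-s) x y ^ p ∂μ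
      = ∫⁻ x, c ^ q * powerKernel S (e * q + s * p) (-(s * p)) x y ∂μ := by
        refine lintegral_congr_ae ?_
        filter_upwards [Measure.ae_ne μ 0] with x hx
        exact mul_powerKernel_zero_rpow hp hq hx
    _ = c ^ q
          * ((∫⁻ x in {x | (x, y) ∈ S}, ‖x‖ₑ ^ (-(e * q + s * p)) ∂μ) * ‖y‖ₑ ^ (s * p)) := by
        rw [lintegral_const_mul _ (measurable_powerKernel hS _ _).of_uncurry_right,
          lintegral_powerKernel_left μ hS, neg_neg]
    _ ≤ c ^ q * (B * ‖y‖ₑ ^ (-(s * p)) * ‖y‖ₑ ^ (s * p)) := by gcongr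
    _ = c ^ q * B := by
        rw [mul_assoc B, ← ENNReal.rpow_add _ _ (enorm_ne_zero.2 hy) enorm_ne_top,
          neg_add_cancel, ENNReal.rpow_zero, mul_one]

lemma isBoundedKernel_powerKernel (hpp' : p.HolderConjugate p') (hpq : p ≤ q)
    (hab : a + b = finrank ℝ E / q + finrank ℝ E / p') (hS : MeasurableSet S)
    (hSs : ∀ x y : E, (x, y) ∈ S → ‖y‖ₑ ^ s ≤ ‖x‖ₑ ^ s) {A B : ℝ≥0∞} (hA : A ≠ ⊤) (hB : B ≠ ⊤)
    (hrow : ∀ x : E, x ≠ 0 → ∫⁻ y in {y | (x, y) ∈ S}, ‖y‖ₑ ^ (-((b + s) * p')) ∂μ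
      ≤ A * ‖x‖ₑ ^ (finrank ℝ E - (b + s) * p'))
    (hcol : ∀ y : E, y ≠ 0 → ∫⁻ x in {x | (x, y) ∈ S}, ‖x‖ₑ ^ (-(finrank ℝ E + s * p)) ∂μ
      ≤ B * ‖y‖ₑ ^ (-(s * p))) :
    IsBoundedKernel p q μ μ (powerKernel S a b) := by
  have hp := hpp'.pos
  have hp' := hpp'.symm.pos
  have hq : 0 < q := hp.trans_le hpq
  set d : ℝ := (finrank ℝ E : ℝ)
  have hne : ∀ᵐ x ∂μ, x ≠ 0 := Measure.ae_ne μ 0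
  have hu_exp : d / p' - (a + (b + s)) = -(d / q + s) := by linarith
  have hfactored : IsBoundedKernel p q μ μ
      fun x y => powerKernel S a (b + s) x y * powerKernel S 0 (-s) x y := by
    refine .of_factorization hpp' hpq (measurable_powerKernel hS _ _)
      (measurable_powerKernel hS _ _) (u := fun x => A ^ (1 / p') * ‖x‖ₑ ^ (-(d / q + s)))
      (v := fun x => ‖x‖ₑ ^ s) (B := (A ^ (1 / p')) ^ q * B) (by fun_prop) (by fun_prop)
      (by finiteness) ?_ (ae_of_all _ fun x => ae_of_all _ fun y => ?_) ?_
    · filter_upwards [hne] with x hx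
      rw [← hu_exp]
      exact lintegral_powerKernel_rpow_le hS hp' hx (hrow x hx)
    · by_cases h : (x, y) ∈ S
      · simpa [powerKernel_of_mem h] using hSs x y h
      · simp [powerKernel_of_notMem h]
    · filter_upwards [hne] with y hy
      refine lintegral_mul_powerKernel_zero_rpow_le hS hp hq hy ?_
      rw [div_mul_cancel₀ _ hq.ne']
      exact hcol y hy
  refine hfactored.mono_ae hq.le (ae_of_all _ fun x => ?_)
  filter_upwards [hne] with y hy
  exact (powerKernel_mul_powerKernel_zero hy).ge

lemma isBoundedKernel_powerKernel_enorm_snd_le (hpp' : p.HolderConjugate p') (hpq : p ≤ q)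
    (hab : a + b = finrank ℝ E / q + finrank ℝ E / p') (hb : b < finrank ℝ E / p') :
    IsBoundedKernel p q μ μ (powerKernel {z : E × E | ‖z.2‖ₑ ≤ ‖z.1‖ₑ} a b) := by
  have hp := hpp'.pos
  have hp' := hpp'.symm.pos
  set d : ℝ := (finrank ℝ E : ℝ) with hd
  set s := (d / p' - b) / 2 with hs_def
  have hs : 0 < s := by linarith
  have hrow_exp : (b + s) * p' < d := by rw [← lt_div_iff₀ hp']; linarith
  have hcol_exp : d < d + s * p := lt_add_of_pos_right _ (by positivity)
  obtain ⟨A, hA, hrow⟩ := exists_setLIntegral_enorm_le_rpow μ hrow_exp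
  obtain ⟨B, hB, hcol⟩ := exists_setLIntegral_le_enorm_rpow μ hcol_exp
  rw [← hd, sub_add_cancel_left] at hcol
  exact isBoundedKernel_powerKernel μ hpp' hpq hab
    (measurableSet_le (by fun_prop) (by fun_prop)) (fun x y h => ENNReal.rpow_le_rpow h hs.le) hA hB
    (fun x hx => hrow _ (enorm_ne_zero.2 hx) enorm_ne_top)
    (fun y hy => hcol _ (enorm_ne_zero.2 hy) enorm_ne_top)

lemma isBoundedKernel_powerKernel_enorm_fst_le (hpp' : p.HolderConjugate p') (hpq : p ≤ q)
    (hab : a + b = finrank ℝ E / q + finrank ℝ E / p') (ha : a < finrank ℝ E / q) :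
    IsBoundedKernel p q μ μ (powerKernel {z : E × E | ‖z.1‖ₑ ≤ ‖z.2‖ₑ} a b) := by
  have hp := hpp'.pos
  have hp' := hpp'.symm.pos
  set d : ℝ := (finrank ℝ E : ℝ) with hd
  set s := (d / p' - b) / 2 with hs_def
  have hs : s < 0 := by linarith
  have hrow_exp : d < (b + s) * p' := by rw [← div_lt_iff₀ hp']; linarith
  have hcol_exp : d + s * p < d := add_lt_of_neg_right _ (mul_neg_of_neg_of_pos hs hp)
  obtain ⟨A, hA, hrow⟩ := exists_setLIntegral_le_enorm_rpow μ hrow_exp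
  obtain ⟨B, hB, hcol⟩ := exists_setLIntegral_enorm_le_rpow μ hcol_exp
  rw [← hd, sub_add_cancel_left] at hcol
  exact isBoundedKernel_powerKernel μ hpp' hpq hab
    (measurableSet_le (by fun_prop) (by fun_prop))
    (fun x y h => ennreal_rpow_le_rpow_of_nonpos hs.le h) hA hB
    (fun x hx => hrow _ (enorm_ne_zero.2 hx) enorm_ne_top)
    (fun y hy => hcol _ (enorm_ne_zero.2 hy) enorm_ne_top)

end HardyKernels

section DiagonalKernel

open Module (finrank)

variable {E : Type*} [NormedAddCommGroup E] {κ lam : ℝ} {x y : E}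

/-- The Stein–Weiss kernel near the diagonal, where `‖x‖` and `‖y‖` are comparable: both power
weights are merged into the single factor `‖x‖ ^ (-κ)`. -/
noncomputable def diagonalKernel (κ lam : ℝ) (x y : E) : ℝ≥0∞ :=
  {z : E × E | ‖z.2‖ₑ ≤ 2 * ‖z.1‖ₑ ∧ ‖z.1‖ₑ ≤ 2 * ‖z.2‖ₑ}.indicator
    (fun z => ‖z.1‖ₑ ^ (-κ) * ‖z.1 - z.2‖ₑ ^ (-lam)) (x, y)

lemma diagonalKernel_of_comparable (hyx : ‖y‖ₑ ≤ 2 * ‖x‖ₑ) (hxy : ‖x‖ₑ ≤ 2 * ‖y‖ₑ) :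
    diagonalKernel κ lam x y = ‖x‖ₑ ^ (-κ) * ‖x - y‖ₑ ^ (-lam) :=
  Set.indicator_of_mem (s := {z : E × E | ‖z.2‖ₑ ≤ 2 * ‖z.1‖ₑ ∧ ‖z.1‖ₑ ≤ 2 * ‖z.2‖ₑ})
    (a := (x, y)) ⟨hyx, hxy⟩ _

lemma diagonalKernel_le {b : ℝ≥0∞} (h : ‖y‖ₑ ≤ 2 * ‖x‖ₑ → ‖x‖ₑ ≤ 2 * ‖y‖ₑ →
    ‖x‖ₑ ^ (-κ) * ‖x - y‖ₑ ^ (-lam) ≤ b) : diagonalKernel κ lam x y ≤ b :=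
  Set.indicator_apply_le' (fun hxy => h hxy.1 hxy.2) fun _ => zero_le

lemma diagonalKernel_le_swap (hκ : 0 ≤ κ) :
    diagonalKernel κ lam x y ≤ 2 ^ κ * diagonalKernel κ lam y x := by
  refine diagonalKernel_le fun hyx hxy => ?_
  rw [diagonalKernel_of_comparable hxy hyx, enorm_sub_rev y x, ← mul_assoc]
  gcongr
  exact ennreal_rpow_neg_le_of_le_mul hκ (by norm_num) (by norm_num) enorm_ne_top hyx

lemma enorm_sub_le_three_mul_enorm_left (hyx : ‖y‖ₑ ≤ 2 * ‖x‖ₑ) : ‖x - y‖ₑ ≤ 3 * ‖x‖ₑ :=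
  calc ‖x - y‖ₑ ≤ ‖x‖ₑ + ‖y‖ₑ := enorm_sub_le
    _ ≤ ‖x‖ₑ + 2 * ‖x‖ₑ := by gcongr
    _ = 3 * ‖x‖ₑ := by ring

variable [MeasurableSpace E] [BorelSpace E] [NormedSpace ℝ E] [FiniteDimensional ℝ E]

lemma measurable_diagonalKernel (κ lam : ℝ) :
    Measurable (Function.uncurry (diagonalKernel (E := E) κ lam)) := by
  have hyx : MeasurableSet {z : E × E | ‖z.2‖ₑ ≤ 2 * ‖z.1‖ₑ} :=
    measurableSet_le (by fun_prop) (by fun_prop)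
  have hxy : MeasurableSet {z : E × E | ‖z.1‖ₑ ≤ 2 * ‖z.2‖ₑ} :=
    measurableSet_le (by fun_prop) (by fun_prop)
  exact Measurable.indicator (by fun_prop) (hyx.inter hxy)

variable (μ : Measure E) [μ.IsAddHaarMeasure] [Nontrivial E] {p p' q : ℝ}

lemma exists_lintegral_diagonalKernel_le (hlam : lam < finrank ℝ E) :
    ∃ C : ℝ≥0∞, C ≠ ⊤ ∧
      ∀ x : E, x ≠ 0 → ∫⁻ y, diagonalKernel (finrank ℝ E - lam) lam x y ∂μ ≤ C := by
  obtain ⟨C, hC, hnear⟩ := exists_setLIntegral_enorm_le_rpow μ hlam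
  set κ := (finrank ℝ E : ℝ) - lam
  refine ⟨C * 3 ^ κ, by finiteness, fun x hx => ?_⟩
  have hx0 := enorm_ne_zero.2 hx
  have hball : MeasurableSet {z : E | ‖z‖ₑ ≤ 3 * ‖x‖ₑ} :=
    measurableSet_le measurable_enorm measurable_const
  set k : E → ℝ≥0∞ := {z | ‖z‖ₑ ≤ 3 * ‖x‖ₑ}.indicator fun z => ‖z‖ₑ ^ (-lam)
  calc ∫⁻ y, diagonalKernel κ lam x y ∂μ
      ≤ ∫⁻ y, ‖x‖ₑ ^ (-κ) * k (x - y) ∂μ := by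
        refine lintegral_mono fun y => diagonalKernel_le fun hyx _ => ?_
        have hmem : x - y ∈ {z | ‖z‖ₑ ≤ 3 * ‖x‖ₑ} := enorm_sub_le_three_mul_enorm_left hyx
        simp only [k, Set.indicator_of_mem hmem, le_refl]
    _ = ‖x‖ₑ ^ (-κ) * ∫⁻ z in {z | ‖z‖ₑ ≤ 3 * ‖x‖ₑ}, ‖z‖ₑ ^ (-lam) ∂μ := by
        rw [lintegral_const_mul' _ _ (by simp [hx0]), lintegral_sub_left_eq_self k,
          lintegral_indicator hball]
    _ ≤ ‖x‖ₑ ^ (-κ) * (C * (3 * ‖x‖ₑ) ^ κ) := by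
        gcongr
        exact hnear _ (mul_ne_zero (by norm_num) hx0) (by finiteness)
    _ = C * 3 ^ κ * (‖x‖ₑ ^ (-κ) * ‖x‖ₑ ^ κ) := by
        rw [ENNReal.mul_rpow_of_ne_top (by norm_num) enorm_ne_top]
        ring
    _ = C * 3 ^ κ := by
        rw [← ENNReal.rpow_add _ _ hx0 enorm_ne_top, neg_add_cancel, ENNReal.rpow_zero, mul_one]

lemma isBoundedKernel_diagonalKernel_self (hpp' : p.HolderConjugate p')
    (hlam : lam < finrank ℝ E) :
    IsBoundedKernel p p μ μ (diagonalKernel (finrank ℝ E - lam) lam : E → E → ℝ≥0∞) := by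
  obtain ⟨C, hC, hrow⟩ := exists_lintegral_diagonalKernel_le μ hlam
  set κ := (finrank ℝ E : ℝ) - lam
  have hκ : 0 ≤ κ := sub_nonneg.2 hlam.le
  refine .of_schur hpp' (measurable_diagonalKernel κ lam) (A := C) (B := 2 ^ κ * C) hC
    (by finiteness) ?_ ?_
  · filter_upwards [Measure.ae_ne μ 0] with x hx using hrow x hx
  · filter_upwards [Measure.ae_ne μ 0] with y hy
    calc ∫⁻ x, diagonalKernel κ lam x y ∂μ
        ≤ ∫⁻ x, 2 ^ κ * diagonalKernel κ lam y x ∂μ :=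
          lintegral_mono fun x => diagonalKernel_le_swap hκ
      _ = 2 ^ κ * ∫⁻ x, diagonalKernel κ lam y x ∂μ := lintegral_const_mul' _ _ (by finiteness)
      _ ≤ 2 ^ κ * C := by gcongr; exact hrow y hy

lemma isBoundedKernel_diagonalKernel_of_lt (hpp' : p.HolderConjugate p') (hpq : p < q)
    (hκ : 0 ≤ κ) (hsum : lam + κ = finrank ℝ E / q + finrank ℝ E / p') :
    IsBoundedKernel p q μ μ (diagonalKernel κ lam : E → E → ℝ≥0∞) := by
  have hq : 0 < q := hpp'.pos.trans hpq
  have hriesz := isBoundedKernel_enorm_sub_rpow μ hpp' hpq hsum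
  refine (hriesz.const_mul (c := 3 ^ κ) (by finiteness) hq).mono_ae hq.le
    (ae_of_all _ fun x => ?_)
  filter_upwards [Measure.ae_ne μ x] with y hy
  refine diagonalKernel_le fun hyx _ => ?_
  calc ‖x‖ₑ ^ (-κ) * ‖x - y‖ₑ ^ (-lam)
      ≤ 3 ^ κ * ‖x - y‖ₑ ^ (-κ) * ‖x - y‖ₑ ^ (-lam) := by
        gcongr
        exact ennreal_rpow_neg_le_of_le_mul hκ (by norm_num) (by norm_num) enorm_ne_top
          (enorm_sub_le_three_mul_enorm_left hyx)
    _ = 3 ^ κ * ‖x - y‖ₑ ^ (-(lam + κ)) := by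
        rw [mul_assoc, ← ENNReal.rpow_add _ _ (enorm_ne_zero.2 (sub_ne_zero.2 hy.symm))
          enorm_ne_top, neg_add_rev]

lemma isBoundedKernel_diagonalKernel (hpp' : p.HolderConjugate p') (hpq : p ≤ q)
    (hlam : lam < finrank ℝ E) (hκ : 0 ≤ κ)
    (hsum : lam + κ = finrank ℝ E / q + finrank ℝ E / p') :
    IsBoundedKernel p q μ μ (diagonalKernel κ lam : E → E → ℝ≥0∞) := by
  rcases hpq.lt_or_eq with hlt | rfl
  · exact isBoundedKernel_diagonalKernel_of_lt μ hpp' hlt hκ hsum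
  · have hκ_eq : κ = finrank ℝ E - lam := by
      rw [eq_sub_iff_add_eq', hsum, div_eq_mul_inv, div_eq_mul_inv, ← mul_add,
        hpp'.inv_add_inv_eq_one, mul_one]
    rw [hκ_eq]
    exact isBoundedKernel_diagonalKernel_self μ hpp' hlam

end DiagonalKernel

section SteinWeiss

open Module (finrank)

variable {E : Type*} [NormedAddCommGroup E]

/-- The kernel of `f ↦ |x| ^ (-β) * T_λ (|y| ^ (-α) * f)`: in terms of `g = |y| ^ α * f` the
Stein–Weiss inequality is the `L^p → L^q` bound for this kernel. -/
noncomputable def steinWeissKernel (lam α β : ℝ) (x y : E) : ℝ≥0∞ :=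
  ‖x‖ₑ ^ (-β) * (‖x - y‖ₑ ^ (-lam) * ‖y‖ₑ ^ (-α))

section PointwiseBounds

variable {lam : ℝ} (α β : ℝ) {x y : E}

lemma steinWeissKernel_le_of_two_mul_enorm_snd_le (hlam : 0 ≤ lam) (hx : x ≠ 0)
    (hyx : 2 * ‖y‖ₑ ≤ ‖x‖ₑ) :
    steinWeissKernel lam α β x y
      ≤ 2 ^ lam * powerKernel {z | ‖z.2‖ₑ ≤ ‖z.1‖ₑ} (lam + β) α x y := by
  rw [powerKernel_of_mem (show ‖y‖ₑ ≤ ‖x‖ₑ from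
    (le_mul_of_one_le_left' one_le_two).trans hyx)]
  calc ‖x‖ₑ ^ (-β) * (‖x - y‖ₑ ^ (-lam) * ‖y‖ₑ ^ (-α))
      ≤ ‖x‖ₑ ^ (-β) * (2 ^ lam * ‖x‖ₑ ^ (-lam) * ‖y‖ₑ ^ (-α)) := by
        gcongr
        exact ennreal_rpow_neg_le_of_le_mul hlam two_ne_zero (by norm_num) enorm_ne_top
          (enorm_le_two_mul_enorm_sub hyx)
    _ = 2 ^ lam * (‖x‖ₑ ^ (-lam) * ‖x‖ₑ ^ (-β) * ‖y‖ₑ ^ (-α)) := by ring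
    _ = 2 ^ lam * (‖x‖ₑ ^ (-(lam + β)) * ‖y‖ₑ ^ (-α)) := by
        rw [← ENNReal.rpow_add _ _ (enorm_ne_zero.2 hx) enorm_ne_top, neg_add]

lemma steinWeissKernel_swap : steinWeissKernel lam α β x y = steinWeissKernel lam β α y x := by
  rw [steinWeissKernel, steinWeissKernel, enorm_sub_rev]
  ring

lemma steinWeissKernel_le_of_two_mul_enorm_fst_le (hlam : 0 ≤ lam) (hy : y ≠ 0)
    (hxy : 2 * ‖x‖ₑ ≤ ‖y‖ₑ) :
    steinWeissKernel lam α β x y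
      ≤ 2 ^ lam * powerKernel {z | ‖z.1‖ₑ ≤ ‖z.2‖ₑ} β (lam + α) x y := by
  have hle : ‖x‖ₑ ≤ ‖y‖ₑ := (le_mul_of_one_le_left' one_le_two).trans hxy
  have hswap := steinWeissKernel_le_of_two_mul_enorm_snd_le β α hlam hy hxy
  rw [powerKernel_of_mem (by exact hle)] at hswap ⊢
  rwa [steinWeissKernel_swap, mul_comm (‖x‖ₑ ^ (-β))]

lemma steinWeissKernel_le_of_comparable (hx : x ≠ 0) (hyx : ‖y‖ₑ ≤ 2 * ‖x‖ₑ)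
    (hxy : ‖x‖ₑ ≤ 2 * ‖y‖ₑ) :
    steinWeissKernel lam α β x y ≤ 2 ^ |α| * diagonalKernel (α + β) lam x y := by
  rw [diagonalKernel_of_comparable hyx hxy]
  calc ‖x‖ₑ ^ (-β) * (‖x - y‖ₑ ^ (-lam) * ‖y‖ₑ ^ (-α))
      ≤ ‖x‖ₑ ^ (-β) * (‖x - y‖ₑ ^ (-lam) * (2 ^ |α| * ‖x‖ₑ ^ (-α))) := by
        gcongr
        exact ennreal_rpow_neg_le_of_comparable α two_ne_zero (by norm_num) enorm_ne_top hyx hxy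
    _ = 2 ^ |α| * (‖x‖ₑ ^ (-α) * ‖x‖ₑ ^ (-β) * ‖x - y‖ₑ ^ (-lam)) := by ring
    _ = 2 ^ |α| * (‖x‖ₑ ^ (-(α + β)) * ‖x - y‖ₑ ^ (-lam)) := by
        rw [← ENNReal.rpow_add _ _ (enorm_ne_zero.2 hx) enorm_ne_top, neg_add]

lemma steinWeissKernel_le (hlam : 0 ≤ lam) (hx : x ≠ 0) (hy : y ≠ 0) :
    steinWeissKernel lam α β x y
      ≤ 2 ^ lam * powerKernel {z | ‖z.2‖ₑ ≤ ‖z.1‖ₑ} (lam + β) α x y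
        + (2 ^ lam * powerKernel {z | ‖z.1‖ₑ ≤ ‖z.2‖ₑ} β (lam + α) x y
          + 2 ^ |α| * diagonalKernel (α + β) lam x y) := by
  rcases le_total (2 * ‖y‖ₑ) ‖x‖ₑ with hyx | hxy
  · exact (steinWeissKernel_le_of_two_mul_enorm_snd_le α β hlam hx hyx).trans le_self_add
  rcases le_total (2 * ‖x‖ₑ) ‖y‖ₑ with hxy' | hyx
  · exact (steinWeissKernel_le_of_two_mul_enorm_fst_le α β hlam hy hxy').trans
      (le_self_add.trans le_add_self)
  · exact (steinWeissKernel_le_of_comparable α β hx hyx hxy).trans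
      (le_add_self.trans le_add_self)

end PointwiseBounds

variable [NormedSpace ℝ E] [FiniteDimensional ℝ E] [MeasurableSpace E] [BorelSpace E]
  (μ : Measure E) [μ.IsAddHaarMeasure] {lam p p' q α β : ℝ}

lemma isBoundedKernel_steinWeissKernel [Nontrivial E] (hlam0 : 0 ≤ lam) (hlam : lam < finrank ℝ E)
    (hpp' : p.HolderConjugate p') (hpq : p ≤ q) (hα : α < finrank ℝ E / p')
    (hβ : β < finrank ℝ E / q) (hαβ : 0 ≤ α + β)
    (hsum : lam + α + β = finrank ℝ E / q + finrank ℝ E / p') :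
    IsBoundedKernel p q μ μ (steinWeissKernel lam α β : E → E → ℝ≥0∞) := by
  have hq : 0 < q := hpp'.pos.trans_le hpq
  have hq1 : 1 ≤ q := hpp'.lt.le.trans hpq
  have hlo_meas : MeasurableSet {z : E × E | ‖z.2‖ₑ ≤ ‖z.1‖ₑ} :=
    measurableSet_le (by fun_prop) (by fun_prop)
  have hhi_meas : MeasurableSet {z : E × E | ‖z.1‖ₑ ≤ ‖z.2‖ₑ} :=
    measurableSet_le (by fun_prop) (by fun_prop)
  have hlo := isBoundedKernel_powerKernel_enorm_snd_le μ (a := lam + β) hpp' hpq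
    (by linarith) hα
  have hhi := isBoundedKernel_powerKernel_enorm_fst_le μ (b := lam + α) hpp' hpq
    (by linarith) hβ
  have hdiag := isBoundedKernel_diagonalKernel μ hpp' hpq hlam hαβ (by linarith)
  have hsum_bounded := (hlo.const_mul (c := 2 ^ lam) (by finiteness) hq).add hq1
    ((measurable_powerKernel hlo_meas _ _).const_mul _)
    (((measurable_powerKernel hhi_meas _ _).const_mul _).add
      ((measurable_diagonalKernel _ _).const_mul _))
    ((hhi.const_mul (c := 2 ^ lam) (by finiteness) hq).add hq1
      ((measurable_powerKernel hhi_meas _ _).const_mul _)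
      ((measurable_diagonalKernel _ _).const_mul _)
      (hdiag.const_mul (c := 2 ^ |α|) (by finiteness) hq))
  refine hsum_bounded.mono_ae hq.le ?_
  filter_upwards [Measure.ae_ne μ 0] with x hx
  filter_upwards [Measure.ae_ne μ 0] with y hy
  exact steinWeissKernel_le α β hlam0 hx hy

lemma lintegral_steinWeissKernel_mul [Nontrivial E] (lam α β : ℝ) {g : E → ℝ≥0∞}
    (hg : Measurable g) (x : E) :
    ∫⁻ y, steinWeissKernel lam α β x y * (g y * ‖y‖ₑ ^ α) ∂μ
      = ‖x‖ₑ ^ (-β) * ∫⁻ y, g y / ‖x - y‖ₑ ^ lam ∂μ := by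
  rw [← lintegral_const_mul _ (by fun_prop)]
  refine lintegral_congr_ae ?_
  filter_upwards [Measure.ae_ne μ 0] with y hy
  calc ‖x‖ₑ ^ (-β) * (‖x - y‖ₑ ^ (-lam) * ‖y‖ₑ ^ (-α)) * (g y * ‖y‖ₑ ^ α)
      = ‖x‖ₑ ^ (-β) * (g y * ‖x - y‖ₑ ^ (-lam)) * (‖y‖ₑ ^ (-α) * ‖y‖ₑ ^ α) := by ring
    _ = ‖x‖ₑ ^ (-β) * (g y / ‖x - y‖ₑ ^ lam) := by
        rw [← ENNReal.rpow_add _ _ (enorm_ne_zero.2 hy) enorm_ne_top, neg_add_cancel,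
          ENNReal.rpow_zero, mul_one, ENNReal.rpow_neg ‖x - y‖ₑ, div_eq_mul_inv]

theorem stein_weiss_inequality_general (hlam0 : 0 < lam) (hlam : lam < finrank ℝ E)
    (hpp' : p.HolderConjugate p') (hpq : p ≤ q) (hα : α < finrank ℝ E / p')
    (hβ : β < finrank ℝ E / q) (hαβ : 0 ≤ α + β)
    (hscal : 1 / q = 1 / p + (lam + α + β) / finrank ℝ E - 1) :
    ∃ C : ℝ, 0 < C ∧ ∀ g : E → ℝ≥0∞, Measurable g →
      (∫⁻ x, (‖x‖ₑ ^ (-β) * ∫⁻ y, g y / ‖x - y‖ₑ ^ lam ∂μ) ^ q ∂μ) ^ (1 / q)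
        ≤ ENNReal.ofReal C * (∫⁻ x, (g x * ‖x‖ₑ ^ α) ^ p ∂μ) ^ (1 / p) := by
  have hd : (0 : ℝ) < finrank ℝ E := hlam0.trans hlam
  have : Nontrivial E := Module.nontrivial_of_finrank_pos (R := ℝ) (Nat.cast_pos.1 hd)
  have hsum : lam + α + β = finrank ℝ E / q + finrank ℝ E / p' := by
    have hp' : 1 / p' = 1 - 1 / p := by simpa only [one_div] using hpp'.one_sub_inv.symm
    rw [← mul_one_div, ← mul_one_div _ p', hscal, hp']
    field_simp
    ring
  obtain ⟨C, hC, hbound⟩ :=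
    isBoundedKernel_steinWeissKernel μ hlam0.le hlam hpp' hpq hα hβ hαβ hsum
  refine ⟨C.toReal + 1, by positivity, fun g hg => ?_⟩
  simp_rw [← lintegral_steinWeissKernel_mul μ lam α β hg]
  refine (hbound _ (by fun_prop)).trans ?_
  gcongr
  exact (ENNReal.ofReal_toReal hC).ge.trans (ENNReal.ofReal_le_ofReal (lt_add_one _).le)

end SteinWeiss

/-- Stein–Weiss inequality: for `0 < λ < d`, `1 < p ≤ q < ∞`, `α < d/p'`, `β < d/q`,
`α + β ≥ 0` and `1/q = 1/p + (λ+α+β)/d - 1`, there is `C` such that for every measurable `f`,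
`(∫ (|x|^{-β} ∫ |f(y)|/|x-y|^λ dy)^q dx)^{1/q} ≤ C (∫ (|f(x)| |x|^α)^p dx)^{1/p}`. -/
theorem stein_weiss_inequality (d : ℕ) (hd : 1 ≤ d) (lam p p' q α β : ℝ)
    (hlam0 : 0 < lam) (hlamd : lam < d) (hp : 1 < p) (hpq : p ≤ q)
    (hp' : 1 / p + 1 / p' = 1) (hα : α < (d : ℝ) / p') (hβ : β < (d : ℝ) / q)
    (hαβ : 0 ≤ α + β) (hscal : 1 / q = 1 / p + (lam + α + β) / d - 1) :
    ∃ C : ℝ, 0 < C ∧ ∀ f : EuclideanSpace ℝ (Fin d) → ℝ, Measurable f →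
      (∫⁻ x : EuclideanSpace ℝ (Fin d),
          ((‖x‖₊ : ℝ≥0∞) ^ (-β) *
            ∫⁻ y : EuclideanSpace ℝ (Fin d),
              (‖f y‖₊ : ℝ≥0∞) / (‖x - y‖₊ : ℝ≥0∞) ^ lam) ^ q) ^ (1 / q) ≤
        ENNReal.ofReal C *
          (∫⁻ x : EuclideanSpace ℝ (Fin d),
            ((‖f x‖₊ : ℝ≥0∞) * (‖x‖₊ : ℝ≥0∞) ^ α) ^ p) ^ (1 / p) := by
  have hpp' : p.HolderConjugate p' :=
    Real.holderConjugate_iff.2 ⟨hp, by simpa only [one_div] using hp'⟩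
  simp_rw [← finrank_euclideanSpace_fin (𝕜 := ℝ) (n := d)] at hlamd hα hβ hscal
  obtain ⟨C, hC, hbound⟩ :=
    stein_weiss_inequality_general volume hlam0 hlamd hpp' hpq hα hβ hαβ hscal
  exact ⟨C, hC, fun f hf => hbound (fun x => ‖f x‖ₑ) hf.enorm⟩
end
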